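/- arXiv:0709.3993 — 3 statements merged into one kernel-verified Lean document; each statement's English description precedes it below -/
import Mathlib

section
/- Let Q be a plurisubharmonic real polynomial on C² that is not harmonic (as a function on C² ≅ R⁴), and which is homogeneous of degree 2p in z₁ and of degree 2q in z₂, i.e., Q(t z₁, z₂) = t^{2p} Q(z₁, z₂) and Q(z₁, t z₂) = t^{2q} Q(z₁, z₂) for all real t > 0 (p, q positive integers). Then there exist positive integers d, D and a homogeneous, subharmonic, non-harmonic real polynomial U on C such that Q(z₁, z₂) = U(z₁^d z₂^D) for all (z₁, z₂) ∈ C². -/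
/-!
For fixed `z` put `u(ζ) = Q(e^{bζ} z₁, e^{-aζ} z₂)`, where `(a, b)` is the bidegree of `Q`. This is
subharmonic, and by bihomogeneity it depends on `Im ζ` alone, so it is convex in `Im ζ`. It is also
`2π`-periodic in `Im ζ`, hence constant: `Q` is invariant under this action of `ℂ`. Comparing
coefficients, every monomial `z₁^m₀ z̄₁^m₁ z₂^m₂ z̄₂^m₃` of `Q` satisfies `b m₀ = a m₂` and
`b m₁ = a m₃`. With `a = d g`, `b = D g` and `d`, `D` coprime, it is therefore a monomial in
`w = z₁^d z₂^D` and `w̄`, which gives `Q = U ∘ w`. By the chain rule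
`ΔQ = (|∂₁w|² + |∂₂w|²) (ΔU) ∘ w`, so `Q` and `U` share the sign and the vanishing of the Laplacian
wherever `dw ≠ 0`; the images of these points are dense in `ℂ`.
-/

open Complex ComplexConjugate Metric Set

noncomputable section

/-- Wirtinger derivative `∂f` in the complex direction `e`. -/
def wd (f : ℂ × ℂ → ℂ) (e : ℂ × ℂ) (z : ℂ × ℂ) : ℂ :=
  (1 / 2) * (fderiv ℝ f z e - Complex.I * fderiv ℝ f z (Complex.I • e))

/-- Conjugate Wirtinger derivative `∂̄f` in the complex direction `e`. -/
def wdbar (f : ℂ × ℂ → ℂ) (e : ℂ × ℂ) (z : ℂ × ℂ) : ℂ :=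
  (1 / 2) * (fderiv ℝ f z e + Complex.I * fderiv ℝ f z (Complex.I • e))

/-- Mixed second derivative `∂²P/∂z_(ej)∂z̄_(ek)` of a real-valued function. -/
def mixedDeriv (P : ℂ × ℂ → ℝ) (ej ek : ℂ × ℂ) (z : ℂ × ℂ) : ℂ :=
  wd (wdbar (fun w => (P w : ℂ)) ek) ej z

/-- The Levi form of `P` at `z` in the direction `v`. -/
def leviForm (P : ℂ × ℂ → ℝ) (z v : ℂ × ℂ) : ℂ :=
  mixedDeriv P (1, 0) (1, 0) z * v.1 * conj v.1 +
  mixedDeriv P (1, 0) (0, 1) z * v.1 * conj v.2 +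
  mixedDeriv P (0, 1) (1, 0) z * v.2 * conj v.1 +
  mixedDeriv P (0, 1) (0, 1) z * v.2 * conj v.2

/-- `P` is plurisubharmonic on all of `ℂ²`. -/
def IsPsh (P : ℂ × ℂ → ℝ) : Prop := ∀ z v, 0 ≤ (leviForm P z v).re

/-- `P` is strictly plurisubharmonic at `z`. -/
def IsStrictPshAt (P : ℂ × ℂ → ℝ) (z : ℂ × ℂ) : Prop :=
  ∀ v, v ≠ 0 → 0 < (leviForm P z v).re

/-- The Levi-degeneracy set of `P`. -/
def leviDegen (P : ℂ × ℂ → ℝ) : Set (ℂ × ℂ) :=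
  {z | ¬ IsStrictPshAt P z}

/-- One-variable Wirtinger derivative. -/
def wd1 (f : ℂ → ℂ) (z : ℂ) : ℂ :=
  (1 / 2) * (fderiv ℝ f z 1 - Complex.I * fderiv ℝ f z Complex.I)

def wdbar1 (f : ℂ → ℂ) (z : ℂ) : ℂ :=
  (1 / 2) * (fderiv ℝ f z 1 + Complex.I * fderiv ℝ f z Complex.I)

/-- The Laplacian of a function on `ℂ`, as `4 ∂∂̄`. -/
def lap (u : ℂ → ℝ) (z : ℂ) : ℂ := 4 * wd1 (wdbar1 fun w => (u w : ℂ)) z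

def IsHarmonic (u : ℂ → ℝ) : Prop := ∀ z, lap u z = 0

def Subharmonic (u : ℂ → ℝ) : Prop := ∀ z, 0 ≤ (lap u z).re

/-- The Laplacian of a function on `ℂ² ≅ ℝ⁴`. -/
def lap2 (P : ℂ × ℂ → ℝ) (z : ℂ × ℂ) : ℂ :=
  4 * (mixedDeriv P (1, 0) (1, 0) z + mixedDeriv P (0, 1) (0, 1) z)

/-- `P` is a real-valued polynomial in `z₁, z̄₁, z₂, z̄₂`. -/
def IsRealPoly2 (P : ℂ × ℂ → ℝ) : Prop :=
  ∃ Q : MvPolynomial (Fin 4) ℂ,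
    ∀ z : ℂ × ℂ, (P z : ℂ) = MvPolynomial.eval ![z.1, conj z.1, z.2, conj z.2] Q

/-- `u` is a real-valued polynomial in `z, z̄`. -/
def IsRealPoly1 (u : ℂ → ℝ) : Prop :=
  ∃ Q : MvPolynomial (Fin 2) ℂ,
    ∀ z : ℂ, (u z : ℂ) = MvPolynomial.eval ![z, conj z] Q

/-- `F` is a holomorphic polynomial map on `ℂ²`. -/
def IsPolyMap2 (F : ℂ × ℂ → ℂ) : Prop :=
  ∃ Q : MvPolynomial (Fin 2) ℂ, ∀ z : ℂ × ℂ, F z = MvPolynomial.eval ![z.1, z.2] Q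

/-- `P` has no pluriharmonic terms: in its (unique) monomial expansion in
`z₁, z̄₁, z₂, z̄₂` every monomial involves both a conjugated and an
unconjugated variable. Indexing: `0 ↦ z₁`, `1 ↦ z̄₁`, `2 ↦ z₂`, `3 ↦ z̄₂`. -/
def NoPluriharmonicTerms (P : ℂ × ℂ → ℝ) : Prop :=
  ∃ Q : MvPolynomial (Fin 4) ℂ,
    (∀ z : ℂ × ℂ, (P z : ℂ) = MvPolynomial.eval ![z.1, conj z.1, z.2, conj z.2] Q) ∧
    ∀ m ∈ Q.support, (m 1 ≠ 0 ∨ m 3 ≠ 0) ∧ (m 0 ≠ 0 ∨ m 2 ≠ 0)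

/-- `P` is pluriharmonic: the real part of an entire function. -/
def IsPluriharmonic (P : ℂ × ℂ → ℝ) : Prop :=
  ∃ f : ℂ × ℂ → ℂ, Differentiable ℂ f ∧ ∀ z, P z = (f z).re

/-- `P` is homogeneous of degree `d`. -/
def HomogeneousDeg (P : ℂ × ℂ → ℝ) (d : ℕ) : Prop :=
  ∀ t : ℝ, 0 < t → ∀ z : ℂ × ℂ, P (t • z) = t ^ d * P z

/-- The directions `ζ` such that `P` is harmonic along the line `{(ζw, w)}`. -/
def harmDirs (P : ℂ × ℂ → ℝ) : Set ℂ := {ζ | IsHarmonic fun w => P (ζ * w, w)}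

/-- The union of all complex lines through `0` along which `P` is harmonic. -/
def linesUnion (P : ℂ × ℂ → ℝ) : Set (ℂ × ℂ) :=
  {z | (∃ ζ ∈ harmDirs P, z.1 = ζ * z.2) ∨
       (IsHarmonic (fun w => P (w, 0)) ∧ z.2 = 0)}

/-- `P` is harmonic along the smooth part of the set `V`: for every injective
holomorphic parametrization by the unit disc of a piece of `V`, the pullback
of `P` is harmonic. -/
def HarmonicAlong (P : ℂ × ℂ → ℝ) (V : Set (ℂ × ℂ)) : Prop :=
  ∀ φ : ℂ → ℂ × ℂ, DifferentiableOn ℂ φ (Metric.ball 0 1) →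
    Set.InjOn φ (Metric.ball 0 1) → φ '' Metric.ball 0 1 ⊆ V →
    ∀ ζ ∈ Metric.ball (0 : ℂ) 1, lap (fun w => P (φ w)) ζ = 0

/-- `S` contains no complex-analytic subvariety of positive dimension. -/
def NoPosDimVariety (S : Set (ℂ × ℂ)) : Prop :=
  ∀ φ : ℂ → ℂ × ℂ, DifferentiableOn ℂ φ (Metric.ball 0 1) →
    φ '' Metric.ball 0 1 ⊆ S →
    ∀ x ∈ Metric.ball (0 : ℂ) 1, ∀ y ∈ Metric.ball (0 : ℂ) 1, φ x = φ y

/-- Property (A) for a homogeneous polynomial `P`. -/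
def PropertyA (P : ℂ × ℂ → ℝ) : Prop :=
  NoPosDimVariety (leviDegen P \ linesUnion P) ∧
  ∃ W : Set (ℂ × ℂ), IsClosed W ∧ (∀ z ∈ W, ∀ t : ℝ, 0 < t → t • z ∈ W) ∧
    leviDegen P \ linesUnion P ⊆ W ∧ interior W ∩ linesUnion P = ∅

/-- Property (B): there is an entire function all of whose level curves have
smooth part along which `P` is harmonic. -/
def PropertyB (P : ℂ × ℂ → ℝ) : Prop :=
  ∃ H : ℂ × ℂ → ℂ, Differentiable ℂ H ∧ ∀ c : ℂ, HarmonicAlong P (H ⁻¹' {c})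

/-- The anisotropic dilation `(t^{1/m₁}z₁, t^{1/m₂}z₂)`. -/
def wdil (m₁ m₂ : ℕ) (t : ℝ) (z : ℂ × ℂ) : ℂ × ℂ :=
  (((t ^ ((m₁ : ℝ)⁻¹) : ℝ) : ℂ) * z.1, ((t ^ ((m₂ : ℝ)⁻¹) : ℝ) : ℂ) * z.2)

/-- `(m₁,m₂)`-homogeneity with weight `r`. -/
def WHomog (m₁ m₂ : ℕ) (P : ℂ × ℂ → ℝ) (r : ℝ) : Prop :=
  ∀ t : ℝ, 0 < t → ∀ z : ℂ × ℂ, P (wdil m₁ m₂ t z) = t ^ r * P z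

/-- The weighted curve `{z₁^a = ζ z₂^b}`. -/
def wCurve (a b : ℕ) (ζ : ℂ) : Set (ℂ × ℂ) := {z | z.1 ^ a = ζ * z.2 ^ b}

/-- The parameters `ζ ∈ ℂ` of weighted curves along which `P` is harmonic. -/
def wHarmDirs (P : ℂ × ℂ → ℝ) (a b : ℕ) : Set ℂ :=
  {ζ | HarmonicAlong P (wCurve a b ζ)}

/-- The union of all curves in `E(P)` (including the one for `ζ = ∞`). -/
def wEUnion (P : ℂ × ℂ → ℝ) (a b : ℕ) : Set (ℂ × ℂ) :=
  {z | (∃ ζ ∈ wHarmDirs P a b, z.1 ^ a = ζ * z.2 ^ b) ∨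
       (HarmonicAlong P {w : ℂ × ℂ | w.2 = 0} ∧ z.2 = 0)}

/-- Property (A) in the `(m₁,m₂)`-homogeneous setting (with wedges). -/
def PropertyAW (m₁ m₂ : ℕ) (P : ℂ × ℂ → ℝ) : Prop :=
  NoPosDimVariety (leviDegen P \ wEUnion P (m₁ / Nat.gcd m₁ m₂) (m₂ / Nat.gcd m₁ m₂)) ∧
  ∃ W : Set (ℂ × ℂ), IsClosed W ∧ (∀ z ∈ W, ∀ t : ℝ, 0 < t → wdil m₁ m₂ t z ∈ W) ∧
    leviDegen P \ wEUnion P (m₁ / Nat.gcd m₁ m₂) (m₂ / Nat.gcd m₁ m₂) ⊆ W ∧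
    interior W ∩ wEUnion P (m₁ / Nat.gcd m₁ m₂) (m₂ / Nat.gcd m₁ m₂) = ∅

/-! ### The Levi form as a Laplacian along complex lines -/

lemma fderiv_fderiv_comp_apply {𝕜 E F G : Type*} [NontriviallyNormedField 𝕜]
    [NormedAddCommGroup E] [NormedSpace 𝕜 E] [NormedAddCommGroup F] [NormedSpace 𝕜 F]
    [NormedAddCommGroup G] [NormedSpace 𝕜 G] {f : F → G} {g : E → F}
    (hf : ContDiff 𝕜 2 f) (hg : ContDiff 𝕜 2 g) (z u v : E) :
    fderiv 𝕜 (fderiv 𝕜 (f ∘ g)) z u v =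
      fderiv 𝕜 (fderiv 𝕜 f) (g z) (fderiv 𝕜 g z u) (fderiv 𝕜 g z v) +
        fderiv 𝕜 f (g z) (fderiv 𝕜 (fderiv 𝕜 g) z u v) := by
  have hf' : Differentiable 𝕜 (fderiv 𝕜 f) :=
    (hf.fderiv_right (m := 1) le_rfl).differentiable one_ne_zero
  have hg' : Differentiable 𝕜 (fderiv 𝕜 g) :=
    (hg.fderiv_right (m := 1) le_rfl).differentiable one_ne_zero
  have hfd := hf.differentiable two_ne_zero
  have hgd := hg.differentiable two_ne_zero
  have hcomp : fderiv 𝕜 (f ∘ g) = fun w => ((fderiv 𝕜 f ∘ g) w).comp (fderiv 𝕜 g w) :=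
    funext fun w => fderiv_comp w (hfd (g w)) (hgd w)
  rw [hcomp, (((hf' (g z)).hasFDerivAt.comp z (hgd z).hasFDerivAt).clm_comp
    (hg' z).hasFDerivAt).fderiv]
  simp [add_comm]

lemma fderiv_fderiv_comm {E F : Type*} [NormedAddCommGroup E] [NormedSpace ℝ E]
    [NormedAddCommGroup F] [NormedSpace ℝ F] {f : E → F} (hf : ContDiff ℝ 2 f) (z u v : E) :
    fderiv ℝ (fderiv ℝ f) z u v = fderiv ℝ (fderiv ℝ f) z v u :=
  hf.contDiffAt.isSymmSndFDerivAt (by simp) u v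

section LineLaplacian

variable {E F : Type*} [NormedAddCommGroup E] [NormedSpace ℂ E]
  [NormedAddCommGroup F] [NormedSpace ℂ F]

lemma fderiv_real_fderiv_real_apply {g : E → F} (hg : ContDiff ℂ 2 g) (z u v : E) :
    fderiv ℝ (fderiv ℝ g) z u v = fderiv ℂ (fderiv ℂ g) z u v := by
  have hg' : Differentiable ℂ (fderiv ℂ g) :=
    (hg.fderiv_right (m := 1) le_rfl).differentiable one_ne_zero
  have hreal : fderiv ℝ g = ContinuousLinearMap.restrictScalarsL ℂ E F ℝ ℝ ∘ fderiv ℂ g :=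
    funext fun w => (hg.differentiable two_ne_zero w).fderiv_restrictScalars ℝ
  rw [hreal, ((ContinuousLinearMap.restrictScalarsL ℂ E F ℝ ℝ).hasFDerivAt.comp z
    ((hg' z).hasFDerivAt.restrictScalars ℝ)).fderiv]
  rfl

/-- The Laplacian at `ζ = 0` of `ζ ↦ f (z + ζ v)`, that is, four times the Levi form of `f` at `z`
in the direction `v`. It is written with the real Hessian, for which the chain rule is available. -/
def lineLaplacian (f : E → ℝ) (z v : E) : ℝ :=
  fderiv ℝ (fderiv ℝ f) z v v + fderiv ℝ (fderiv ℝ f) z (I • v) (I • v)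

lemma lineLaplacian_smul (f : E → ℝ) (z : E) (c : ℂ) (v : E) :
    lineLaplacian f z (c • v) = normSq c * lineLaplacian f z v := by
  have hc : c • v = c.re • v + c.im • (I • v) := by
    conv_lhs => rw [← re_add_im c]
    simp only [add_smul, mul_smul, Complex.coe_smul]
  have hIc : I • c • v = c.re • (I • v) - c.im • v := by
    rw [hc, smul_add, smul_comm I c.re, smul_comm I c.im, smul_smul I I, I_mul_I, neg_smul,
      one_smul, smul_neg, sub_eq_add_neg]
  rw [lineLaplacian, hIc, hc]
  simp only [map_add, map_sub, map_smul, add_apply, sub_apply,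
    smul_apply, smul_eq_mul, normSq_apply, lineLaplacian]
  ring

/-- The second derivative of the holomorphic map `g` drops out: it is complex bilinear, hence
contributes opposite amounts in the directions `v` and `I • v`. -/
lemma lineLaplacian_comp {f : F → ℝ} {g : E → F} (hf : ContDiff ℝ 2 f) (hg : ContDiff ℂ 2 g)
    (z v : E) :
    lineLaplacian (f ∘ g) z v = lineLaplacian f (g z) (fderiv ℂ g z v) := by
  have hD : ∀ w, fderiv ℝ g z w = fderiv ℂ g z w := fun w => by
    rw [(hg.differentiable two_ne_zero z).fderiv_restrictScalars ℝ]; rfl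
  have hD2 : fderiv ℂ (fderiv ℂ g) z (I • v) (I • v) = -fderiv ℂ (fderiv ℂ g) z v v := by
    rw [map_smul, map_smul, smul_apply, smul_smul, I_mul_I, neg_one_smul]
  simp only [lineLaplacian, fderiv_fderiv_comp_apply hf (hg.restrict_scalars ℝ), hD,
    fderiv_real_fderiv_real_apply hg]
  rw [hD2, map_neg, map_smul]
  ring

lemma hasFDerivAt_ofReal_fderiv_apply {f : E → ℝ} (hf : ContDiff ℝ 2 f) (z v : E) :
    HasFDerivAt (fun w => fderiv ℝ (fun x => (f x : ℂ)) w v)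
      (ofRealCLM.comp ((fderiv ℝ (fderiv ℝ f) z).flip v)) z := by
  have hcast : (fun w => fderiv ℝ (fun x => (f x : ℂ)) w v) = fun w => (fderiv ℝ f w v : ℂ) := by
    funext w
    have hw := (ofRealCLM.hasFDerivAt (x := f w)).comp w
      (hf.differentiable two_ne_zero w).hasFDerivAt
    exact DFunLike.congr_fun hw.fderiv v
  have hf' : HasFDerivAt (fderiv ℝ f) (fderiv ℝ (fderiv ℝ f) z) z :=
    ((hf.fderiv_right (m := 1) le_rfl).differentiable one_ne_zero z).hasFDerivAt
  rw [hcast]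
  refine ofRealCLM.hasFDerivAt.comp z ((hf'.clm_apply (hasFDerivAt_const v z)).congr_fderiv ?_)
  ext
  simp

/-- The left-hand side is `∂_u ∂̄_v f`, spelled out so as to cover both `mixedDeriv` and `lap`. -/
lemma wirtinger_wirtingerBar_eq_hessian {f : E → ℝ} (hf : ContDiff ℝ 2 f) (z u v : E) :
    let B := fun x y => (fderiv ℝ (fderiv ℝ f) z x y : ℂ)
    let g := fun w => (1 / 2 : ℂ) * (fderiv ℝ (fun x => (f x : ℂ)) w v +
      I * fderiv ℝ (fun x => (f x : ℂ)) w (I • v))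
    1 / 2 * (fderiv ℝ g z u - I * fderiv ℝ g z (I • u)) =
      1 / 4 * (B u v + B (I • u) (I • v) + I * (B u (I • v) - B (I • u) v)) := by
  intro B g
  have hg : HasFDerivAt g _ z := ((hasFDerivAt_ofReal_fderiv_apply hf z v).add
    ((hasFDerivAt_ofReal_fderiv_apply hf z (I • v)).const_mul I)).const_mul (1 / 2 : ℂ)
  rw [hg.fderiv]
  simp only [one_div, smul_apply, add_apply,
    ContinuousLinearMap.comp_apply, ContinuousLinearMap.flip_apply, ofRealCLM_apply, smul_eq_mul]
  linear_combination (-1 / 4 * B (I • u) (I • v)) * I_mul_I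

end LineLaplacian

lemma mixedDeriv_eq_hessian {P : ℂ × ℂ → ℝ} (hP : ContDiff ℝ 2 P) (u v z : ℂ × ℂ) :
    let B := fun x y => (fderiv ℝ (fderiv ℝ P) z x y : ℂ)
    mixedDeriv P u v z =
      1 / 4 * (B u v + B (I • u) (I • v) + I * (B u (I • v) - B (I • u) v)) :=
  wirtinger_wirtingerBar_eq_hessian hP z u v

lemma leviForm_eq_lineLaplacian {P : ℂ × ℂ → ℝ} (hP : ContDiff ℝ 2 P) (z v : ℂ × ℂ) :
    leviForm P z v = (lineLaplacian P z v / 4 : ℝ) := by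
  have hv : v = v.1.re • (1, 0) + v.1.im • (I • (1, 0)) + v.2.re • (0, 1) +
      v.2.im • (I • (0, 1)) := by
    ext <;> simp
  have hIv : I • v = v.1.re • (I • (1, 0)) - v.1.im • (1, 0) + v.2.re • (I • (0, 1)) -
      v.2.im • (0, 1) := by
    ext <;> apply Complex.ext <;> simp
  have hsymm := fderiv_fderiv_comm hP z
  rw [lineLaplacian, hIv]
  nth_rw 2 3 [hv]
  apply Complex.ext <;>
  · simp [leviForm, mixedDeriv_eq_hessian hP, hsymm (0, 1) (1, 0), hsymm (0, 1) (I • (1, 0)),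
      hsymm (I • (0, 1)) (1, 0), hsymm (I • (0, 1)) (I • (1, 0)), hsymm (I • (1, 0)) (1, 0),
      hsymm (I • (0, 1)) (0, 1), -Prod.smul_mk]
    ring

lemma lap_eq_lineLaplacian {u : ℂ → ℝ} (hu : ContDiff ℝ 2 u) (w : ℂ) :
    lap u w = (lineLaplacian u w 1 : ℝ) := by
  have h := wirtinger_wirtingerBar_eq_hessian hu w 1 1
  simp only [smul_eq_mul, mul_one, fderiv_fderiv_comm hu w I 1, sub_self, mul_zero, add_zero] at h
  unfold lap wd1 wdbar1
  rw [h, lineLaplacian, smul_eq_mul, mul_one]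
  push_cast
  ring

lemma lap2_eq_lineLaplacian {P : ℂ × ℂ → ℝ} (hP : ContDiff ℝ 2 P) (z : ℂ × ℂ) :
    lap2 P z = (lineLaplacian P z (1, 0) + lineLaplacian P z (0, 1) : ℝ) := by
  have h1 := leviForm_eq_lineLaplacian hP z (1, 0)
  have h2 := leviForm_eq_lineLaplacian hP z (0, 1)
  simp only [leviForm, map_one, map_zero, mul_one, mul_zero, add_zero, zero_add] at h1 h2
  rw [lap2, h1, h2]
  push_cast
  ring

/-! ### Invariance under an action of `ℂ` -/

lemma eq_of_convexOn_of_periodic {f : ℝ → ℝ} {c : ℝ} (hf : ConvexOn ℝ univ f)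
    (hper : Function.Periodic f c) (hc : 0 < c) (x y : ℝ) : f x = f y := by
  suffices hle : ∀ x y, f x ≤ f y from le_antisymm (hle x y) (hle y x)
  intro x y
  obtain ⟨x', hx', hxx'⟩ := hper.exists_mem_Ico hc x y
  have hmax := hf.le_max_of_mem_Icc (mem_univ y) (mem_univ (y + c)) (Ico_subset_Icc_self hx')
  rwa [hper y, max_self, ← hxx'] at hmax

lemma fderiv_fderiv_apply_self_eq_zero {E : Type*} [NormedAddCommGroup E] [NormedSpace ℝ E]
    {u : E → ℝ} (hu : ContDiff ℝ 2 u) {v : E} (htrans : ∀ (x : E) (t : ℝ), u (x + t • v) = u x)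
    (x : E) : fderiv ℝ (fderiv ℝ u) x v v = 0 := by
  have hD : ∀ y, fderiv ℝ u y v = 0 := fun y => by
    have hline := (hu.differentiable two_ne_zero y).hasFDerivAt.hasLineDerivAt v
    rw [HasLineDerivAt, funext (htrans y)] at hline
    exact hline.unique (hasDerivAt_const 0 (u y))
  have hD2 := ((hu.fderiv_right (m := 1) le_rfl).differentiable one_ne_zero x).hasFDerivAt
    |>.clm_apply (hasFDerivAt_const v x)
  have hzero := hD2.unique ((hasFDerivAt_const 0 x).congr_of_eventuallyEq (.of_forall hD))
  simpa using DFunLike.congr_fun hzero v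

lemma convexOn_imaginary_axis {u : ℂ → ℝ} (hu : ContDiff ℝ 2 u) (hsub : Subharmonic u)
    (htrans : ∀ (ζ : ℂ) (t : ℝ), u (ζ + t) = u ζ) :
    ConvexOn ℝ univ fun s : ℝ => u (s * I) := by
  have hline : ∀ s : ℝ, HasDerivAt (fun s : ℝ => (s : ℂ) * I) I s := fun s => by
    simpa using (hasDerivAt_id s).ofReal_comp.mul_const I
  have hu' := (hu.fderiv_right (m := 1) le_rfl).differentiable one_ne_zero
  have hderiv : ∀ s : ℝ, HasDerivAt (fun s : ℝ => u (s * I)) (fderiv ℝ u (s * I) I) s :=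
    fun s => (hu.differentiable two_ne_zero _).hasFDerivAt.comp_hasDerivAt s (hline s)
  have hderiv2 : ∀ s : ℝ, HasDerivAt (fun s : ℝ => fderiv ℝ u (s * I) I)
      (fderiv ℝ (fderiv ℝ u) (s * I) I I) s := fun s => by
    simpa using ((hu' _).hasFDerivAt.comp_hasDerivAt s (hline s)).clm_apply (hasDerivAt_const s I)
  refine convexOn_of_hasDerivWithinAt2_nonneg convex_univ
    (fun s _ => (hderiv s).continuousAt.continuousWithinAt)
    (fun s _ => (hderiv s).hasDerivWithinAt) (fun s _ => (hderiv2 s).hasDerivWithinAt)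
    fun s _ => ?_
  have hreal : fderiv ℝ (fderiv ℝ u) (s * I) 1 1 = 0 :=
    fderiv_fderiv_apply_self_eq_zero hu (fun ζ t => by rw [real_smul, mul_one, htrans]) _
  have hnonneg := hsub (s * I)
  rwa [lap_eq_lineLaplacian hu, ofReal_re, lineLaplacian, hreal,
    zero_add, smul_eq_mul, mul_one] at hnonneg

lemma subharmonic_eq_of_translation_of_periodic {u : ℂ → ℝ} (hu : ContDiff ℝ 2 u)
    (hsub : Subharmonic u) (htrans : ∀ (ζ : ℂ) (t : ℝ), u (ζ + t) = u ζ) {c : ℝ} (hc : 0 < c)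
    (hper : Function.Periodic u (c * I)) (ζ η : ℂ) : u ζ = u η := by
  have him : ∀ ξ : ℂ, u ξ = u (ξ.im * I) := fun ξ => by
    rw [← htrans (ξ.im * I) ξ.re, add_comm, re_add_im]
  rw [him ζ, him η]
  refine eq_of_convexOn_of_periodic (convexOn_imaginary_axis hu hsub htrans) (fun s => ?_) hc _ _
  simp only [ofReal_add, add_mul, hper _]

lemma subharmonic_comp_of_isPsh {P : ℂ × ℂ → ℝ} (hP : ContDiff ℝ 2 P) (hpsh : IsPsh P)
    {γ : ℂ → ℂ × ℂ} (hγ : ContDiff ℂ 2 γ) : Subharmonic (P ∘ γ) := fun ζ => by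
  have hlevi := hpsh (γ ζ) (fderiv ℂ γ ζ 1)
  rw [leviForm_eq_lineLaplacian hP, ofReal_re, ← lineLaplacian_comp hP hγ] at hlevi
  rw [lap_eq_lineLaplacian (hP.comp (hγ.restrict_scalars ℝ)), ofReal_re]
  linarith

/-- Along the orbit, `P` is a function of `Im ζ` alone, convex because `P` is plurisubharmonic, and
`2π`-periodic. -/
lemma eq_of_isPsh_of_bihomogeneous {a b : ℕ} {P : ℂ × ℂ → ℝ} (hP : ContDiff ℝ 2 P)
    (hpsh : IsPsh P)
    (hhom1 : ∀ t : ℝ, 0 < t → ∀ z : ℂ × ℂ, P ((t : ℂ) * z.1, z.2) = t ^ a * P z)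
    (hhom2 : ∀ t : ℝ, 0 < t → ∀ z : ℂ × ℂ, P (z.1, (t : ℂ) * z.2) = t ^ b * P z)
    (z : ℂ × ℂ) (ζ : ℂ) : P (exp (b * ζ) * z.1, exp (-(a * ζ)) * z.2) = P z := by
  let γ : ℂ → ℂ × ℂ := fun ζ => (exp (b * ζ) * z.1, exp (-(a * ζ)) * z.2)
  have hγ : ContDiff ℂ 2 γ := by fun_prop
  have hscale : ∀ s t : ℝ, 0 < s → 0 < t → ∀ z : ℂ × ℂ,
      P (s * z.1, t * z.2) = s ^ a * (t ^ b * P z) := fun s t hs ht z => by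
    rw [← hhom2 t ht, ← hhom1 s hs]
  have htrans : ∀ (ζ : ℂ) (t : ℝ), (P ∘ γ) (ζ + t) = (P ∘ γ) ζ := fun ζ t => by
    have hshift : γ (ζ + t) =
        (Real.exp (b * t) * (γ ζ).1, Real.exp (-(a * t)) * (γ ζ).2) := by
      ext <;> simp only [γ, ofReal_exp, ofReal_mul, ofReal_neg, ofReal_natCast, mul_add, neg_add,
        exp_add] <;> ring
    rw [Function.comp_apply, hshift, hscale _ _ (Real.exp_pos _) (Real.exp_pos _),
      ← mul_assoc, ← Real.exp_nat_mul, ← Real.exp_nat_mul, ← Real.exp_add, mul_neg,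
      mul_left_comm, add_neg_cancel, Real.exp_zero, one_mul, Function.comp_apply]
  have hper : Function.Periodic (P ∘ γ) ((2 * Real.pi : ℝ) * I) := fun ζ => by
    refine congrArg P (Prod.ext (congrArg (· * z.1) ?_) (congrArg (· * z.2) ?_)) <;>
      push_cast
    · rw [mul_add, exp_periodic.nat_mul b]
    · rw [mul_add, neg_add, ← sub_eq_add_neg, exp_periodic.sub_nat_mul_eq a]
  have hconst := subharmonic_eq_of_translation_of_periodic (hP.comp (hγ.restrict_scalars ℝ))
    (subharmonic_comp_of_isPsh hP hpsh hγ) htrans Real.two_pi_pos hper ζ 0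
  simpa [γ] using hconst

/-! ### Polynomials in `z₁, z̄₁, z₂, z̄₂` -/

section Polynomials

open MvPolynomial

/-- In the variables `z = x + iy`, `z̄ = x - iy` the points to be tested are the real ones, which
suffice. -/
lemma mvPolynomial_eq_of_eval_conj {σ : Type*} {P R : MvPolynomial (σ ⊕ σ) ℂ}
    (h : ∀ z : σ → ℂ, eval (Sum.elim z (conj ∘ z)) P = eval (Sum.elim z (conj ∘ z)) R) :
    P = R := by
  let T : MvPolynomial (σ ⊕ σ) ℂ → MvPolynomial (σ ⊕ σ) ℂ := bind₁ (Sum.elim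
    (fun i => X (Sum.inl i) + C I * X (Sum.inr i)) fun i => X (Sum.inl i) - C I * X (Sum.inr i))
  have heval : ∀ (x : σ ⊕ σ → ℂ) (S : MvPolynomial (σ ⊕ σ) ℂ), eval x (T S) =
      eval (Sum.elim (fun i => x (.inl i) + I * x (.inr i))
        fun i => x (.inl i) - I * x (.inr i)) S := fun x S => by
    refine (eval₂Hom_bind₁ _ _ _ _).trans ?_
    congr 2
    ext (i | i) <;> simp
  have hT : T P = T R := by
    refine funext_set (fun _ => range ((↑) : ℝ → ℂ))
      (fun _ => infinite_range_of_injective ofReal_injective) fun x hx => ?_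
    choose y hy using fun i => hx i (mem_univ i)
    obtain rfl : x = fun i => (y i : ℂ) := funext fun i => (hy i).symm
    have hconj : (fun i => (y (.inl i) : ℂ) - I * y (.inr i)) =
        conj ∘ fun i => (y (.inl i) : ℂ) + I * y (.inr i) := by
      ext i
      simp [sub_eq_add_neg]
    rw [heval, heval, hconj, h]
  refine MvPolynomial.funext fun y => ?_
  let x : σ ⊕ σ → ℂ := Sum.elim (fun i => (y (.inl i) + y (.inr i)) / 2)
    fun i => (y (.inl i) - y (.inr i)) / (2 * I)
  have hxy : Sum.elim (fun i => x (.inl i) + I * x (.inr i))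
      (fun i => x (.inl i) - I * x (.inr i)) = y := by
    ext (i | i) <;> simp only [x, Sum.elim_inl, Sum.elim_inr] <;> field_simp <;> ring
  have hx := congrArg (eval x) hT
  rwa [heval, heval, hxy] at hx

lemma coeff_bind₁_C_mul_X {σ R : Type*} [CommSemiring R] (c : σ → R) (P : MvPolynomial σ R)
    (m : σ →₀ ℕ) :
    coeff m (bind₁ (fun i => C (c i) * X i) P) = (m.prod fun i k => c i ^ k) * coeff m P := by
  classical
  induction P using MvPolynomial.induction_on' with
  | monomial n r =>
    have hprod : bind₁ (fun i => C (c i) * X i) (monomial n r) =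
        monomial n ((n.prod fun i k => c i ^ k) * r) := by
      simp_rw [bind₁_monomial, mul_pow, Finset.prod_mul_distrib, ← map_pow, ← map_prod,
        prod_X_pow_eq_monomial, C_mul_monomial, mul_one, mul_comm r, Finsupp.prod]
    rw [hprod, coeff_monomial, coeff_monomial]
    split_ifs with hnm
    · rw [hnm]
    · rw [mul_zero]
  | add P R hP hR => rw [map_add, coeff_add, hP, hR, coeff_add, mul_add]

/-- The tuple `(z₁, z̄₁, z₂, z̄₂)` at which the polynomials of `IsRealPoly2` are evaluated. -/
def wirtingerCoords (z : ℂ × ℂ) : Fin 4 → ℂ := ![z.1, conj z.1, z.2, conj z.2]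

lemma mvPolynomial_eq_of_eval_wirtingerCoords {P R : MvPolynomial (Fin 4) ℂ}
    (h : ∀ z, eval (wirtingerCoords z) P = eval (wirtingerCoords z) R) : P = R := by
  let e : Fin 4 → Fin 2 ⊕ Fin 2 := ![.inl 0, .inr 0, .inl 1, .inr 1]
  have he : Function.Injective e := by decide
  refine rename_injective e he (mvPolynomial_eq_of_eval_conj fun z => ?_)
  have hcoords : Sum.elim z (conj ∘ z) ∘ e = wirtingerCoords (z 0, z 1) := by
    ext i
    fin_cases i <;> rfl
  rw [eval_rename, eval_rename, hcoords, h]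

lemma prod_wirtingerCoords_pow_eq_one {P : MvPolynomial (Fin 4) ℂ} {c : ℂ × ℂ}
    (hinv : ∀ z : ℂ × ℂ,
      eval (wirtingerCoords (c.1 * z.1, c.2 * z.2)) P = eval (wirtingerCoords z) P)
    {m : Fin 4 →₀ ℕ} (hm : m ∈ P.support) : ∏ i, wirtingerCoords c i ^ m i = 1 := by
  have hscale : bind₁ (fun i => C (wirtingerCoords c i) * X i) P = P := by
    refine mvPolynomial_eq_of_eval_wirtingerCoords fun z => ?_
    refine (eval₂Hom_bind₁ _ _ _ _).trans (Eq.trans ?_ (hinv z))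
    congr 2
    ext i
    fin_cases i <;> simp [wirtingerCoords]
  have hcoeff := coeff_bind₁_C_mul_X (wirtingerCoords c) P m
  rw [hscale, Finsupp.prod_fintype _ _ fun _ => pow_zero _] at hcoeff
  exact (mul_eq_right₀ (mem_support_iff.mp hm)).mp hcoeff.symm

lemma eq_zero_of_exp_ofReal_mul_eq_one {c : ℂ} (h : ∀ t : ℝ, exp (t * c) = 1) : c = 0 := by
  have hderiv : HasDerivAt (fun t : ℝ => exp (t * c)) c 0 := by
    simpa using ((hasDerivAt_id (0 : ℝ)).ofReal_comp.mul_const c).cexp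
  exact hderiv.unique ((hasDerivAt_const 0 1).congr_of_eventuallyEq (.of_forall h))

lemma eq_zero_of_exp_add_conj_eq_one {A B : ℂ} (h : ∀ ζ : ℂ, exp (ζ * A + conj ζ * B) = 1) :
    A = 0 ∧ B = 0 := by
  have hsum : A + B = 0 := eq_zero_of_exp_ofReal_mul_eq_one fun t => by
    rw [← h t, conj_ofReal, mul_add]
  have hdiff : I * (A - B) = 0 := eq_zero_of_exp_ofReal_mul_eq_one fun t => by
    rw [← h (t * I), map_mul, conj_ofReal, conj_I]
    ring_nf
  have hAB := (mul_eq_zero.mp hdiff).resolve_left I_ne_zero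
  exact ⟨by linear_combination (hsum + hAB) / 2, by linear_combination (hsum - hAB) / 2⟩

lemma exponents_proportional_of_mem_support {a b : ℕ} {P : MvPolynomial (Fin 4) ℂ}
    (hinv : ∀ (z : ℂ × ℂ) (ζ : ℂ),
      eval (wirtingerCoords (exp (b * ζ) * z.1, exp (-(a * ζ)) * z.2)) P =
        eval (wirtingerCoords z) P)
    {m : Fin 4 →₀ ℕ} (hm : m ∈ P.support) : b * m 0 = a * m 2 ∧ b * m 1 = a * m 3 := by
  have hexp : ∀ ζ : ℂ,
      exp (ζ * (b * m 0 - a * m 2) + conj ζ * (b * m 1 - a * m 3)) = 1 := fun ζ => by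
    rw [← prod_wirtingerCoords_pow_eq_one (c := (exp (b * ζ), exp (-(a * ζ))))
      (fun z => hinv z ζ) hm]
    simp only [Fin.prod_univ_four, wirtingerCoords, Matrix.cons_val, ← exp_conj, ← exp_nat_mul,
      ← exp_add, map_mul, map_neg, map_natCast]
    ring_nf
  obtain ⟨h0, h1⟩ := eq_zero_of_exp_add_conj_eq_one hexp
  rw [sub_eq_zero] at h0 h1
  exact ⟨mod_cast h0, mod_cast h1⟩

lemma exists_eq_mul_of_mul_eq_mul {d D m n : ℕ} (hd : 0 < d) (hcop : d.Coprime D)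
    (h : D * m = d * n) : ∃ k, m = d * k ∧ n = D * k := by
  obtain ⟨k, rfl⟩ := hcop.dvd_of_dvd_mul_left ⟨n, h⟩
  exact ⟨k, rfl, (Nat.eq_of_mul_eq_mul_left hd (by rw [← h, mul_left_comm])).symm⟩

lemma exists_eval_wirtingerCoords_eq_eval_monomial {d D : ℕ} {P : MvPolynomial (Fin 4) ℂ}
    (hP : ∀ m ∈ P.support, ∃ k l, m 0 = d * k ∧ m 2 = D * k ∧ m 1 = d * l ∧ m 3 = D * l) :
    ∃ R : MvPolynomial (Fin 2) ℂ, ∀ z : ℂ × ℂ, eval (wirtingerCoords z) P =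
      eval ![z.1 ^ d * z.2 ^ D, conj (z.1 ^ d * z.2 ^ D)] R := by
  choose! k l h0 h2 h1 h3 using hP
  refine ⟨∑ m ∈ P.support, C (coeff m P) * X 0 ^ k m * X 1 ^ l m, fun z => ?_⟩
  rw [eval_eq', map_sum]
  refine Finset.sum_congr rfl fun m hm => ?_
  simp only [Fin.prod_univ_four, wirtingerCoords, Matrix.cons_val, h0 m hm, h1 m hm,
    h2 m hm, h3 m hm, map_mul, map_pow, eval_C, eval_X]
  ring

end Polynomials

lemma contDiff_of_eq_eval {ι E : Type*} [NormedAddCommGroup E] [NormedSpace ℝ E]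
    {n : WithTop ℕ∞} {x : ι → E → ℂ} {P : MvPolynomial ι ℂ} {u : E → ℝ}
    (hx : ∀ i, ContDiff ℝ n (x i)) (hu : ∀ z, (u z : ℂ) = MvPolynomial.eval (x · z) P) :
    ContDiff ℝ n u := by
  have hre : u = fun z => reCLM (∑ m ∈ P.support, P.coeff m * ∏ i ∈ m.support, x i z ^ m i) := by
    funext z
    rw [← MvPolynomial.eval_eq, ← hu z, reCLM_apply, ofReal_re]
  rw [hre]
  exact reCLM.contDiff.comp (ContDiff.sum fun m _ =>
    contDiff_const.mul (contDiff_prod fun i _ => (hx i).pow (m i)))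

lemma contDiff_of_isRealPoly1 {u : ℂ → ℝ} (hu : IsRealPoly1 u) : ContDiff ℝ 2 u := by
  obtain ⟨P, hP⟩ := hu
  refine contDiff_of_eq_eval (x := ![id, conj]) (P := P) (fun i => ?_) fun z => ?_
  · fin_cases i
    exacts [contDiff_id, conjCLE.contDiff]
  · rw [hP z]
    congr 2
    ext i
    fin_cases i <;> rfl

lemma contDiff_of_isRealPoly2 {Q : ℂ × ℂ → ℝ} (hQ : IsRealPoly2 Q) : ContDiff ℝ 2 Q := by
  obtain ⟨P, hP⟩ := hQ
  refine contDiff_of_eq_eval (x := fun i z => wirtingerCoords z i) (P := P) (fun i => ?_) hP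
  fin_cases i
  exacts [contDiff_fst, conjCLE.contDiff.comp contDiff_fst, contDiff_snd,
    conjCLE.contDiff.comp contDiff_snd]

/-! ### Descent through a holomorphic map -/

section Descent

variable {U : ℂ → ℝ} {h : ℂ × ℂ → ℂ}

lemma lap2_comp (hU : ContDiff ℝ 2 U) (hh : ContDiff ℂ 2 h) (z : ℂ × ℂ) :
    lap2 (U ∘ h) z =
      (normSq (fderiv ℂ h z (1, 0)) + normSq (fderiv ℂ h z (0, 1)) : ℝ) * lap U (h z) := by
  have hline : ∀ v, lineLaplacian (U ∘ h) z v =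
      normSq (fderiv ℂ h z v) * lineLaplacian U (h z) 1 := fun v => by
    rw [lineLaplacian_comp hU hh, ← lineLaplacian_smul, smul_eq_mul, mul_one]
  rw [lap2_eq_lineLaplacian (hU.comp (hh.restrict_scalars ℝ)), lap_eq_lineLaplacian hU, hline,
    hline]
  push_cast
  ring

lemma normSq_add_normSq_pos {L : ℂ × ℂ →L[ℂ] ℂ} (hL : L ≠ 0) :
    0 < normSq (L (1, 0)) + normSq (L (0, 1)) := by
  contrapose! hL
  have h1 := normSq_nonneg (L (1, 0))
  have h2 := normSq_nonneg (L (0, 1))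
  ext
  · simpa using normSq_eq_zero.mp (by linarith : normSq (L (1, 0)) = 0)
  · simpa using normSq_eq_zero.mp (by linarith : normSq (L (0, 1)) = 0)

lemma continuous_lap (hU : ContDiff ℝ 2 U) : Continuous (lap U) := by
  have hD : Continuous (fderiv ℝ (fderiv ℝ U)) :=
    (hU.fderiv_right (m := 1) le_rfl).continuous_fderiv one_ne_zero
  have hDD : ∀ v, Continuous fun w => fderiv ℝ (fderiv ℝ U) w v v := fun v =>
    (hD.clm_apply continuous_const).clm_apply continuous_const
  rw [funext (lap_eq_lineLaplacian hU)]
  exact continuous_ofReal.comp ((hDD 1).add (hDD (I • 1)))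

lemma subharmonic_of_isPsh_comp (hU : ContDiff ℝ 2 U) (hh : ContDiff ℂ 2 h)
    (hdense : Dense (h '' {z | fderiv ℂ h z ≠ 0})) (hpsh : IsPsh (U ∘ h)) : Subharmonic U := by
  have hclosed : IsClosed {w | 0 ≤ (lap U w).re} :=
    isClosed_le continuous_const (continuous_re.comp (continuous_lap hU))
  refine fun w => hclosed.closure_subset_iff.mpr ?_ (hdense w)
  rintro _ ⟨z, hz, rfl⟩
  have hcomp : 0 ≤ (lap2 (U ∘ h) z).re := by
    have h1 := hpsh z (1, 0)
    have h2 := hpsh z (0, 1)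
    simp only [leviForm, map_one, map_zero, mul_one, mul_zero, add_zero, zero_add] at h1 h2
    rw [lap2, ← ofReal_ofNat, re_ofReal_mul, add_re]
    exact mul_nonneg zero_le_four (add_nonneg h1 h2)
  rw [lap2_comp hU hh, re_ofReal_mul] at hcomp
  exact nonneg_of_mul_nonneg_right hcomp (normSq_add_normSq_pos hz)

lemma isHarmonic_iff_lap2_comp_eq_zero (hU : ContDiff ℝ 2 U) (hh : ContDiff ℂ 2 h)
    (hdense : Dense (h '' {z | fderiv ℂ h z ≠ 0})) :
    IsHarmonic U ↔ ∀ z, lap2 (U ∘ h) z = 0 := by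
  simp only [lap2_comp hU hh]
  refine ⟨fun hharm z => by rw [hharm, mul_zero], fun hzero => ?_⟩
  refine congrFun ((continuous_lap hU).ext_on hdense continuous_const ?_)
  rintro _ ⟨z, hz, rfl⟩
  exact (mul_eq_zero.mp (hzero z)).resolve_left
    (ofReal_ne_zero.mpr (normSq_add_normSq_pos hz).ne')

end Descent

/-- The monomial `z₁^d z₂^D` as a function on `ℂ²`; the polynomial `Q` factors through it. -/
def monomialMap (d D : ℕ) (z : ℂ × ℂ) : ℂ := z.1 ^ d * z.2 ^ D

section MonomialMap

variable {d D : ℕ}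

lemma exists_monomialMap_one_eq (hd : 0 < d) (w : ℂ) : ∃ x : ℂ, monomialMap d D (x, 1) = w := by
  obtain ⟨x, hx⟩ := IsAlgClosed.exists_pow_nat_eq w hd
  exact ⟨x, by rw [monomialMap, one_pow, mul_one, hx]⟩

lemma contDiff_monomialMap (d D : ℕ) : ContDiff ℂ 2 (monomialMap d D) :=
  (contDiff_fst.pow d).mul (contDiff_snd.pow D)

lemma dense_image_fderiv_monomialMap_ne_zero (hd : 0 < d) :
    Dense (monomialMap d D '' {z | fderiv ℂ (monomialMap d D) z ≠ 0}) := by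
  refine (dense_compl_singleton (0 : ℂ)).mono fun w hw => ?_
  obtain ⟨x, rfl⟩ := exists_monomialMap_one_eq (D := D) hd w
  refine ⟨(x, 1), fun hzero => hw ?_, rfl⟩
  have hdiff := (contDiff_monomialMap d D).differentiable two_ne_zero (x, 1)
  have hcurve : HasDerivAt (fun y : ℂ => y ^ d) (fderiv ℂ (monomialMap d D) (x, 1) (1, 0)) x := by
    simpa [monomialMap, Function.comp_def] using hdiff.hasFDerivAt.comp_hasDerivAt x
      ((hasDerivAt_id x).prodMk (hasDerivAt_const x (1 : ℂ)))
  have hpow : d * x ^ (d - 1) = 0 := by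
    rw [(hasDerivAt_pow d x).unique hcurve, hzero, zero_apply]
  have hx : x = 0 :=
    eq_zero_of_pow_eq_zero ((mul_eq_zero.mp hpow).resolve_left (Nat.cast_ne_zero.mpr hd.ne'))
  rw [mem_singleton_iff, monomialMap, hx, zero_pow hd.ne', zero_mul]

lemma homogeneous_of_comp_monomialMap (hd : 0 < d) {g : ℕ} {U : ℂ → ℝ}
    (hhom : ∀ t : ℝ, 0 < t → ∀ z : ℂ × ℂ, U (monomialMap d D (t * z.1, z.2)) =
      t ^ (d * g) * U (monomialMap d D z)) (t : ℝ) (ht : 0 < t) (w : ℂ) :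
    U (t * w) = t ^ g * U w := by
  obtain ⟨x, rfl⟩ := exists_monomialMap_one_eq (D := D) hd w
  have hroot : (t ^ (d : ℝ)⁻¹) ^ d = t := Real.rpow_inv_natCast_pow ht.le hd.ne'
  have hscale := hhom (t ^ (d : ℝ)⁻¹) (Real.rpow_pos_of_pos ht _) (x, 1)
  rw [pow_mul, hroot] at hscale
  rw [← hscale, monomialMap, monomialMap, mul_pow, ← ofReal_pow, hroot, mul_assoc]

lemma exists_isRealPoly1_of_eval_eq (hd : 0 < d) {Q : ℂ × ℂ → ℝ} {R : MvPolynomial (Fin 2) ℂ}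
    (hR : ∀ z, (Q z : ℂ) = MvPolynomial.eval ![monomialMap d D z, conj (monomialMap d D z)] R) :
    ∃ U, IsRealPoly1 U ∧ Q = U ∘ monomialMap d D := by
  refine ⟨fun w => (MvPolynomial.eval ![w, conj w] R).re, ⟨R, fun w => ?_⟩, funext fun z => ?_⟩
  · obtain ⟨x, rfl⟩ := exists_monomialMap_one_eq (D := D) hd w
    beta_reduce
    rw [← hR, ofReal_re]
  · rw [Function.comp_apply, ← hR, ofReal_re]

end MonomialMap

lemma exists_comp_monomialMap_eq {d D g : ℕ} (hd : 0 < d) (hg : 0 < g) (hcop : d.Coprime D)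
    {Q : ℂ × ℂ → ℝ} (hpoly : IsRealPoly2 Q) (hpsh : IsPsh Q)
    (hhom1 : ∀ t : ℝ, 0 < t → ∀ z : ℂ × ℂ, Q ((t : ℂ) * z.1, z.2) = t ^ (d * g) * Q z)
    (hhom2 : ∀ t : ℝ, 0 < t → ∀ z : ℂ × ℂ, Q (z.1, (t : ℂ) * z.2) = t ^ (D * g) * Q z) :
    ∃ U, IsRealPoly1 U ∧ Q = U ∘ monomialMap d D := by
  have hinv := eq_of_isPsh_of_bihomogeneous (contDiff_of_isRealPoly2 hpoly) hpsh hhom1 hhom2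
  obtain ⟨P, hP⟩ := hpoly
  obtain ⟨R, hR⟩ : ∃ R : MvPolynomial (Fin 2) ℂ, ∀ z, MvPolynomial.eval (wirtingerCoords z) P =
      MvPolynomial.eval ![monomialMap d D z, conj (monomialMap d D z)] R := by
    refine exists_eval_wirtingerCoords_eq_eval_monomial fun m hm => ?_
    obtain ⟨h02, h13⟩ := exponents_proportional_of_mem_support
      (fun z ζ => by rw [wirtingerCoords, ← hP, hinv, hP, wirtingerCoords]) hm
    have hcancel : ∀ {i j : ℕ}, D * g * i = d * g * j → D * i = d * j := fun {i j} hij =>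
      Nat.eq_of_mul_eq_mul_left hg (by linarith)
    obtain ⟨k, h0, h2⟩ := exists_eq_mul_of_mul_eq_mul hd hcop (hcancel h02)
    obtain ⟨l, h1, h3⟩ := exists_eq_mul_of_mul_eq_mul hd hcop (hcancel h13)
    exact ⟨k, l, h0, h2, h1, h3⟩
  exact exists_isRealPoly1_of_eval_eq hd fun z => (hP z).trans (hR z)

theorem bihomogeneous_structure_general (a b : ℕ) (ha : 0 < a) (hb : 0 < b) (Q : ℂ × ℂ → ℝ)
    (hpoly : IsRealPoly2 Q) (hpsh : IsPsh Q)
    (hhom1 : ∀ t : ℝ, 0 < t → ∀ z : ℂ × ℂ, Q ((t : ℂ) * z.1, z.2) = t ^ a * Q z)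
    (hhom2 : ∀ t : ℝ, 0 < t → ∀ z : ℂ × ℂ, Q (z.1, (t : ℂ) * z.2) = t ^ b * Q z) :
    ∃ (d D : ℕ) (U : ℂ → ℝ) (j : ℕ), 0 < d ∧ 0 < D ∧ IsRealPoly1 U ∧
      (∀ t : ℝ, 0 < t → ∀ w : ℂ, U ((t : ℂ) * w) = t ^ j * U w) ∧
      Subharmonic U ∧ (IsHarmonic U ↔ ∀ z, lap2 Q z = 0) ∧
      ∀ z : ℂ × ℂ, Q z = U (z.1 ^ d * z.2 ^ D) := by
  obtain ⟨g, d, D, hg, hcop, rfl, rfl⟩ := Nat.exists_coprime' (Nat.gcd_pos_of_pos_left b ha)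
  have hd : 0 < d := Nat.pos_of_mul_pos_right ha
  have hD : 0 < D := Nat.pos_of_mul_pos_right hb
  obtain ⟨U, hUpoly, rfl⟩ := exists_comp_monomialMap_eq hd hg hcop hpoly hpsh hhom1 hhom2
  have hU := contDiff_of_isRealPoly1 hUpoly
  have hh := contDiff_monomialMap d D
  have hdense := dense_image_fderiv_monomialMap_ne_zero (D := D) hd
  exact ⟨d, D, U, g, hd, hD, hUpoly, homogeneous_of_comp_monomialMap hd hhom1,
    subharmonic_of_isPsh_comp hU hh hdense hpsh, isHarmonic_iff_lap2_comp_eq_zero hU hh hdense,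
    fun _ => rfl⟩

/-- Theorem 2.4: a plurisubharmonic, non-harmonic polynomial on
`ℂ²` that is bihomogeneous of bidegree `(2p, 2q)` has the form `U(z₁^d z₂^D)`. -/
theorem bihomogeneous_structure (p q : ℕ) (hp : 0 < p) (hq : 0 < q) (Q : ℂ × ℂ → ℝ)
    (hpoly : IsRealPoly2 Q) (hpsh : IsPsh Q) (hnh : ¬ ∀ z, lap2 Q z = 0)
    (hhom1 : ∀ t : ℝ, 0 < t → ∀ z : ℂ × ℂ, Q ((t : ℂ) * z.1, z.2) = t ^ (2 * p) * Q z)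
    (hhom2 : ∀ t : ℝ, 0 < t → ∀ z : ℂ × ℂ, Q (z.1, (t : ℂ) * z.2) = t ^ (2 * q) * Q z) :
    ∃ (d D : ℕ) (U : ℂ → ℝ) (j : ℕ), 0 < d ∧ 0 < D ∧ IsRealPoly1 U ∧
      (∀ t : ℝ, 0 < t → ∀ w : ℂ, U ((t : ℂ) * w) = t ^ j * U w) ∧
      Subharmonic U ∧ ¬ IsHarmonic U ∧
      ∀ z : ℂ × ℂ, Q z = U (z.1 ^ d * z.2 ^ D) := by
  obtain ⟨d, D, U, j, hd, hD, hU, hhom, hsub, hharm, hQ⟩ := bihomogeneous_structure_general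
    (2 * p) (2 * q) (by positivity) (by positivity) Q hpoly hpsh hhom1 hhom2
  exact ⟨d, D, U, j, hd, hD, hU, hhom, hsub, hharm.not.mpr hnh, hQ⟩

end
end

section
/- Let P be an (m₁,m₂)-homogeneous (weight 1) plurisubharmonic, non-pluriharmonic real polynomial on C² having Property (B). Then there exist a rational number q* and a holomorphic polynomial F on C² that is (m₁,m₂)-homogeneous with weight q* such that P is harmonic along the smooth part of every level set of F. -/
/-!
Write `δ_s (z₁, z₂) = (s^{m₂} z₁, s^{m₁} z₂)`, so that `P ∘ δ_s` is a positive multiple of `P` for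
real `s > 0`, and write `P_{jk̄}` for the entries of the Levi matrix of `P`.

*A linear equation for the level function.* Let `G` be entire with `P` harmonic along its level
curves. Through each noncritical point of `G` passes an injective holomorphic disc inside the level
curve, and the chain rule `Δ(P ∘ φ) = 4 L_P(φ; φ')` shows that its tangent is a null vector of the
Levi form. Since `P` is plurisubharmonic, this null vector lies in the kernel of the Levi matrix,
which says that `∂₁G P_{2k̄} = ∂₂G P_{1k̄}` for `k = 1, 2`.

*Passage to a homogeneous component.* If `H` is the function from Property (B), then `P` is harmonic
along the level curves of each `H ∘ δ_s`, `s > 0`, so the equation holds for all of them. It is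
linear, hence passes to every coefficient of the expansion of `H ∘ δ_s` in powers of `s`. These
coefficients are entire and weighted homogeneous, hence polynomials. Unless `H` is constant, one of
positive degree `n` is not zero; this is `F`. If `H` is constant, `P` is harmonic along every
holomorphic disc and `F = 0` works.

*Back to harmonicity.* A level `F = c ≠ 0` has no critical points by Euler's identity, so by the
linear equation its tangent vectors are in the kernel of the Levi matrix. On `F = 0` the
differential may vanish identically along a component, when `F` has multiple factors. There the
Euler field `E` spans the tangent direction, since otherwise the dilates of the curve would fill an
open set of zeros. It lies in the kernel of the Levi matrix too: the linear equation reads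
`dF · L_P(E, ·) = n F · L_P`, and `F` vanishes to higher order along a line than its derivative.
-/

open Complex ComplexConjugate Metric Set

noncomputable section

lemma differentiable_intervalIntegral {𝕜 E F : Type*} [RCLike 𝕜] [NormedAddCommGroup E]
    [NormedSpace 𝕜 E] [ProperSpace E] [NormedAddCommGroup F] [NormedSpace 𝕜 F] [NormedSpace ℝ F]
    {K : E → ℝ → F} (hK : ∀ z, Continuous (K z)) (hdiff : ∀ θ, Differentiable 𝕜 fun z => K z θ)
    (hderiv : Continuous fun p : E × ℝ => fderiv 𝕜 (fun z => K z p.2) p.1) (a b : ℝ) :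
    Differentiable 𝕜 fun z => ∫ θ in a..b, K z θ := by
  intro z₀
  obtain ⟨C, hC⟩ := ((isCompact_closedBall z₀ 1).prod isCompact_uIcc).exists_bound_of_continuousOn
    (hderiv.continuousOn (s := closedBall z₀ 1 ×ˢ uIcc a b))
  refine (intervalIntegral.hasFDerivAt_integral_of_dominated_of_fderiv_le
    (F' := fun z θ => fderiv 𝕜 (fun z => K z θ) z) (bound := fun _ => C)
    (closedBall_mem_nhds z₀ one_pos) (.of_forall fun z => (hK z).aestronglyMeasurable)
    ((hK z₀).intervalIntegrable a b)
    (hderiv.comp (Continuous.prodMk_right z₀)).aestronglyMeasurable ?_ intervalIntegrable_const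
    (.of_forall fun θ _ z _ => (hdiff θ z).hasFDerivAt)).differentiableAt
  exact .of_forall fun θ hθ z hz => hC (z, θ) ⟨hz, uIoc_subset_uIcc hθ⟩

section EntireFunctions

variable {E F : Type*} [NormedAddCommGroup E] [NormedSpace ℂ E]
  [NormedAddCommGroup F] [NormedSpace ℂ F]

lemma eq_zero_of_differentiable_of_eventuallyEq_zero [CompleteSpace F] {f : E → F}
    (hf : Differentiable ℂ f) {p : E} (h : f =ᶠ[nhds p] 0) : f = 0 := by
  funext z
  have hline : Differentiable ℂ fun s : ℂ => f (AffineMap.lineMap p z s) := by fun_prop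
  have hev : (fun s : ℂ => f (AffineMap.lineMap p z s)) =ᶠ[nhds 0] fun _ => 0 := by
    have : Filter.Tendsto (AffineMap.lineMap p z : ℂ → E) (nhds 0) (nhds p) :=
      AffineMap.lineMap_continuous.tendsto' 0 p (by simp)
    exact this.eventually h
  simpa using congrFun ((hline.differentiableOn.analyticOnNhd isOpen_univ).eq_of_eventuallyEq
    analyticOnNhd_const hev) 1

lemma eq_zero_of_differentiable_of_forall_pos [CompleteSpace F] {f : ℂ → F}
    (hf : Differentiable ℂ f) (h : ∀ s : ℝ, 0 < s → f s = 0) : f = 0 := by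
  refine (hf.differentiableOn.analyticOnNhd isOpen_univ).eq_of_frequently_eq (z₀ := 0)
    analyticOnNhd_const ?_
  have hreal : Filter.Tendsto ofReal (nhdsWithin 0 (Ioi 0)) (nhdsWithin 0 {0}ᶜ) :=
    continuous_ofReal.continuousWithinAt.tendsto_nhdsWithin fun s (hs : 0 < s) => by simp [hs.ne']
  exact hreal.frequently
    (Filter.Eventually.frequently (eventually_mem_nhdsWithin.mono fun s hs => h s hs))

lemma fderiv_apply_eq_integral_circle [CompleteSpace F] {f : E → F} (hf : Differentiable ℂ f)
    (z e : E) :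
    fderiv ℂ f z e = (2 * Real.pi : ℂ)⁻¹ •
      ∫ θ in (0 : ℝ)..2 * Real.pi, exp (-θ * I) • f (z + exp (θ * I) • e) := by
  have hline : Differentiable ℂ fun s : ℂ => f (z + s • e) := by fun_prop
  have cauchy := hline.diffContOnCl.deriv_eq_smul_circleIntegral (c := 0) one_pos
  have integrand (θ : ℝ) : deriv (circleMap 0 1) θ •
      (1 / (circleMap 0 1 θ - 0) ^ 2) • f (z + circleMap 0 1 θ • e) =
        I • exp (-θ * I) • f (z + exp (θ * I) • e) := by
    simp only [deriv_circleMap, circleMap_zero, ofReal_one, one_mul, sub_zero, smul_smul, neg_mul,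
      exp_neg]
    field_simp
  rw [← (hf z).lineDeriv_eq_fderiv, lineDeriv,
    ← inv_smul_smul₀ two_pi_I_ne_zero (deriv _ _), ← cauchy, circleIntegral]
  simp only [integrand, intervalIntegral.integral_smul]
  rw [smul_smul, mul_inv, inv_mul_cancel_right₀ I_ne_zero]

variable [FiniteDimensional ℂ E] [CompleteSpace F] {f : E → F}

lemma contDiff_one_of_differentiable (hf : Differentiable ℂ f) : ContDiff ℂ 1 f := by
  refine contDiff_one_iff_fderiv.2 ⟨hf, continuous_clm_apply.2 fun e => ?_⟩
  simp only [fderiv_apply_eq_integral_circle hf]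
  have := hf.continuous
  exact (intervalIntegral.continuous_parametric_intervalIntegral_of_continuous'
    (by fun_prop) _ _).const_smul _

lemma differentiable_fderiv_apply (hf : Differentiable ℂ f) (e : E) :
    Differentiable ℂ fun z => fderiv ℂ f z e := by
  have := FiniteDimensional.proper ℂ E
  have hfc := hf.continuous
  have hfc' := (contDiff_one_of_differentiable hf).continuous_fderiv one_ne_zero
  simp only [fderiv_apply_eq_integral_circle hf]
  refine (differentiable_intervalIntegral (fun z => by fun_prop) (fun θ => by fun_prop) ?_
    _ _).const_smul _
  have (p : E × ℝ) : fderiv ℂ (fun z => exp (-p.2 * I) • f (z + exp (p.2 * I) • e)) p.1 =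
      exp (-p.2 * I) • fderiv ℂ f (p.1 + exp (p.2 * I) • e) := by
    rw [fderiv_fun_const_smul (by fun_prop), fderiv_comp_add_right]
  simp only [this]
  fun_prop

lemma contDiff_of_differentiable (hf : Differentiable ℂ f) (n : ℕ) : ContDiff ℂ n f := by
  induction n generalizing f with
  | zero => exact contDiff_zero.2 hf.continuous
  | succ n ih =>
    exact_mod_cast contDiff_succ_iff_fderiv_apply.2
      ⟨hf, by simp, fun e => ih (differentiable_fderiv_apply hf e)⟩

lemma fderiv_fderiv_apply_comm (hf : Differentiable ℂ f) (z u v : E) :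
    fderiv ℂ (fun w => fderiv ℂ f w u) z v = fderiv ℂ (fun w => fderiv ℂ f w v) z u := by
  have hf2 := contDiff_of_differentiable hf 2
  have hsymm : IsSymmSndFDerivAt ℂ f z := hf2.contDiffAt.isSymmSndFDerivAt (by simp)
  have hdf : DifferentiableAt ℂ (fderiv ℂ f) z :=
    (hf2.fderiv_right (m := 1) le_rfl).differentiable one_ne_zero z
  simpa [fderiv_clm_apply hdf (differentiableAt_const _)] using hsymm v u

end EntireFunctions

section LeviForm

lemma I_smul_I_smul {E : Type*} [AddCommGroup E] [Module ℂ E] (x : E) : I • I • x = -x := by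
  rw [smul_smul, I_mul_I, neg_one_smul]

lemma wd_add_dir (f : ℂ × ℂ → ℂ) (u v z : ℂ × ℂ) : wd f (u + v) z = wd f u z + wd f v z := by
  simp only [wd, smul_add, map_add]
  ring

lemma wd_smul_dir (f : ℂ × ℂ → ℂ) (c : ℂ) (u z : ℂ × ℂ) : wd f (c • u) z = c * wd f u z := by
  have real_split (e : ℂ × ℂ) : fderiv ℝ f z (c • e) =
      c.re * fderiv ℝ f z e + c.im * fderiv ℝ f z (I • e) := by
    conv_lhs => rw [← re_add_im c, add_smul, mul_smul, coe_smul, coe_smul, map_add, map_smul,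
      map_smul, real_smul, real_smul]
  rw [wd, wd, smul_comm I c, real_split, real_split, I_smul_I_smul, map_neg]
  linear_combination (1 / 2) * (fderiv ℝ f z u - I * fderiv ℝ f z (I • u)) * re_add_im c +
    (1 / 2) * (c.im * fderiv ℝ f z (I • u)) * I_sq

lemma wdbar_ofReal {P : ℂ × ℂ → ℝ} {z : ℂ × ℂ} (hP : DifferentiableAt ℝ P z) (e : ℂ × ℂ) :
    wdbar (fun w => (P w : ℂ)) e z = (1 / 2) * (fderiv ℝ P z e + I * fderiv ℝ P z (I • e)) := by
  have : HasFDerivAt (fun w => (P w : ℂ)) (ofRealCLM ∘L fderiv ℝ P z) z :=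
    ofRealCLM.hasFDerivAt.comp z hP.hasFDerivAt
  simp [wdbar, this.fderiv]

lemma wdbar1_comp {f : ℂ × ℂ → ℂ} {φ : ℂ → ℂ × ℂ} {w : ℂ} (hf : DifferentiableAt ℝ f (φ w))
    (hφ : DifferentiableAt ℂ φ w) :
    wdbar1 (fun w => f (φ w)) w = wdbar f (deriv φ w) (φ w) := by
  have : HasFDerivAt (fun w => f (φ w)) _ w :=
    hf.hasFDerivAt.comp w (hφ.hasDerivAt.hasFDerivAt.restrictScalars ℝ)
  simp [wdbar1, wdbar, this.fderiv]

variable {P : ℂ × ℂ → ℝ} (hP : ContDiff ℝ 2 P)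
include hP

lemma mixedDeriv_eq_fderiv_fderiv (u v z : ℂ × ℂ) : mixedDeriv P u v z =
    (1 / 4) * (fderiv ℝ (fderiv ℝ P) z u v + fderiv ℝ (fderiv ℝ P) z (I • u) (I • v) +
      I * (fderiv ℝ (fderiv ℝ P) z u (I • v) - fderiv ℝ (fderiv ℝ P) z (I • u) v)) := by
  have hdP : HasFDerivAt (fderiv ℝ P) (fderiv ℝ (fderiv ℝ P) z) z :=
    ((hP.fderiv_right (m := 1) le_rfl).differentiable one_ne_zero z).hasFDerivAt
  have hdir (e : ℂ × ℂ) : HasFDerivAt (fun w => (fderiv ℝ P w e : ℂ))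
      (ofRealCLM ∘L (fderiv ℝ (fderiv ℝ P) z).flip e) z :=
    ofRealCLM.hasFDerivAt.comp z (by simpa using hdP.clm_apply (hasFDerivAt_const e z))
  have hwdbar : wdbar (fun w => (P w : ℂ)) v =
      fun w => (1 / 2) * (fderiv ℝ P w v + I * fderiv ℝ P w (I • v)) :=
    funext fun w => wdbar_ofReal (hP.differentiable two_ne_zero w) v
  have hderiv : HasFDerivAt (wdbar (fun w => (P w : ℂ)) v) _ z :=
    hwdbar ▸ ((hdir v).fun_add ((hdir (I • v)).const_mul I)).const_mul (1 / 2)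
  rw [mixedDeriv, wd, hderiv.fderiv]
  simp only [smul_apply, add_apply,
    ContinuousLinearMap.comp_apply, ContinuousLinearMap.flip_apply, ofRealCLM_apply, smul_eq_mul]
  linear_combination (norm := ring_nf)
    (-1 / 4 * (fderiv ℝ (fderiv ℝ P) z (I • u) (I • v) : ℂ)) * I_sq

lemma conj_mixedDeriv (u v z : ℂ × ℂ) : conj (mixedDeriv P u v z) = mixedDeriv P v u z := by
  have hsymm : IsSymmSndFDerivAt ℝ P z := hP.contDiffAt.isSymmSndFDerivAt (by simp)
  rw [mixedDeriv_eq_fderiv_fderiv hP, mixedDeriv_eq_fderiv_fderiv hP, hsymm u v,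
    hsymm (I • u) (I • v), hsymm u (I • v), hsymm (I • u) v]
  simp only [map_mul, map_add, map_sub, map_div₀, map_one, map_ofNat, conj_I, conj_ofReal]
  ring

lemma continuous_mixedDeriv (u v : ℂ × ℂ) : Continuous (mixedDeriv P u v) := by
  have : Continuous (fderiv ℝ (fderiv ℝ P)) :=
    (hP.fderiv_right (m := 1) le_rfl).continuous_fderiv one_ne_zero
  rw [funext (mixedDeriv_eq_fderiv_fderiv hP u v)]
  fun_prop

lemma leviForm_eq_mixedDeriv (z v : ℂ × ℂ) : leviForm P z v = mixedDeriv P v v z := by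
  have hleft (w : ℂ × ℂ) : mixedDeriv P v w z =
      v.1 * mixedDeriv P (1, 0) w z + v.2 * mixedDeriv P (0, 1) w z := by
    have hv : v = v.1 • (1, 0) + v.2 • (0, 1) := by simp
    conv_lhs => rw [hv]
    simp only [mixedDeriv, wd_add_dir, wd_smul_dir]
  rw [hleft, ← conj_mixedDeriv hP v (1, 0), ← conj_mixedDeriv hP v (0, 1), hleft, hleft, leviForm]
  simp only [map_add, map_mul, conj_mixedDeriv hP]
  ring

/-- The Levi form of a plurisubharmonic function at a point, as a semidefinite inner product. -/
abbrev leviCore (hpsh : IsPsh P) (z : ℂ × ℂ) : PreInnerProductSpace.Core ℂ (ℂ × ℂ) where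
  inner v w := mixedDeriv P w v z
  conj_inner_symm v w := conj_mixedDeriv hP v w z
  re_inner_nonneg v := by simpa [leviForm_eq_mixedDeriv hP] using hpsh z v
  add_left u v w := by
    rw [← conj_mixedDeriv hP, mixedDeriv, wd_add_dir, map_add]
    exact congrArg₂ _ (conj_mixedDeriv hP ..) (conj_mixedDeriv hP ..)
  smul_left u v c := by
    rw [← conj_mixedDeriv hP, mixedDeriv, wd_smul_dir, map_mul]
    exact congrArg _ (conj_mixedDeriv hP ..)

lemma mixedDeriv_eq_zero_of_leviForm_eq_zero (hpsh : IsPsh P) {z v : ℂ × ℂ}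
    (hv : leviForm P z v = 0) (w : ℂ × ℂ) : mixedDeriv P v w z = 0 := by
  let := leviCore hP hpsh z
  have cauchy_schwarz : ‖mixedDeriv P w v z‖ * ‖mixedDeriv P v w z‖ ≤
      (mixedDeriv P v v z).re * (mixedDeriv P w w z).re :=
    InnerProductSpace.Core.inner_mul_inner_self_le (𝕜 := ℂ) v w
  rw [← leviForm_eq_mixedDeriv hP, hv, zero_re, zero_mul, ← conj_mixedDeriv hP v, norm_conj]
    at cauchy_schwarz
  exact norm_eq_zero.1 (mul_self_eq_zero.1 (cauchy_schwarz.antisymm (by positivity)))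

lemma lap_comp_eq_leviForm {φ : ℂ → ℂ × ℂ} {U : Set ℂ} (hU : IsOpen U)
    (hφ : DifferentiableOn ℂ φ U) {ζ : ℂ} (hζ : ζ ∈ U) :
    lap (fun w => P (φ w)) ζ = 4 * leviForm P (φ ζ) (deriv φ ζ) := by
  have hφ' : HasFDerivAt φ
      ((ContinuousLinearMap.toSpanSingleton ℂ (deriv φ ζ)).restrictScalars ℝ) ζ :=
    (hφ.differentiableAt (hU.mem_nhds hζ)).hasDerivAt.hasFDerivAt.restrictScalars ℝ
  have hφ'' : HasFDerivAt (deriv φ)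
      ((ContinuousLinearMap.toSpanSingleton ℂ (deriv (deriv φ) ζ)).restrictScalars ℝ) ζ :=
    ((hφ.deriv hU).differentiableAt (hU.mem_nhds hζ)).hasDerivAt.hasFDerivAt.restrictScalars ℝ
  have first_order : wdbar1 (fun w => (P (φ w) : ℂ)) =ᶠ[nhds ζ] fun w =>
      (1 / 2) * (fderiv ℝ P (φ w) (deriv φ w) + I * fderiv ℝ P (φ w) (I • deriv φ w)) := by
    filter_upwards [hU.mem_nhds hζ] with w hw
    have hPφ := hP.differentiable two_ne_zero (φ w)
    rw [← wdbar_ofReal hPφ]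
    exact wdbar1_comp (f := fun z => (P z : ℂ)) (ofRealCLM.differentiableAt.comp _ hPφ)
      (hφ.differentiableAt (hU.mem_nhds hw))
  have hdP : HasFDerivAt (fderiv ℝ P) (fderiv ℝ (fderiv ℝ P) (φ ζ)) (φ ζ) :=
    ((hP.fderiv_right (m := 1) le_rfl).differentiable one_ne_zero _).hasFDerivAt
  have second_order {ψ : ℂ → ℂ × ℂ} {ψ' : ℂ →L[ℝ] ℂ × ℂ} (hψ : HasFDerivAt ψ ψ' ζ) :
      HasFDerivAt (fun w => (fderiv ℝ P (φ w) (ψ w) : ℂ)) _ ζ :=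
    ofRealCLM.hasFDerivAt.comp ζ ((hdP.comp ζ hφ').clm_apply hψ)
  have hsum := ((second_order hφ'').fun_add
    ((second_order (hφ''.fun_const_smul I)).const_mul I)).const_mul (1 / 2)
  rw [lap, wd1, first_order.fderiv_eq, hsum.fderiv, leviForm_eq_mixedDeriv hP,
    mixedDeriv_eq_fderiv_fderiv hP]
  -- The terms in `φ''` cancel between the two real directions.
  simp only [Function.comp_apply, ContinuousLinearMap.comp_add, smul_add, add_apply,
    smul_apply, ContinuousLinearMap.comp_apply, ContinuousLinearMap.coe_restrictScalars',
    ContinuousLinearMap.toSpanSingleton_apply, one_smul, ofRealCLM_apply, smul_eq_mul,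
    ContinuousLinearMap.flip_apply, I_smul_I_smul, map_neg]
  linear_combination (fderiv ℝ P (φ ζ) (deriv (deriv φ) ζ) -
    fderiv ℝ (fderiv ℝ P) (φ ζ) (I • deriv φ ζ) (I • deriv φ ζ)) * I_sq
end LeviForm

section LevelCurves

lemma exists_implicit_curve {E : Type*} [NormedAddCommGroup E] [NormedSpace ℂ E] {G : E → ℂ}
    (hG : ContDiff ℂ 1 G) {p t u : E} (ht : fderiv ℂ G p t = 0) (hu : fderiv ℂ G p u ≠ 0) :
    ∃ ψ : ℂ → ℂ, ψ 0 = 0 ∧ deriv ψ 0 = 0 ∧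
      ∀ᶠ x in nhds 0, DifferentiableAt ℂ ψ x ∧ G (p + x • t + ψ x • u) = G p := by
  let g : ℂ × ℂ → ℂ := fun q => G (p + q.1 • t + q.2 • u)
  have hg : ContDiffAt ℂ 1 g 0 := by fun_prop
  have hg' : HasFDerivAt g
      (fderiv ℂ G p ∘L (.smulRight (.fst ℂ ℂ ℂ) t + .smulRight (.snd ℂ ℂ ℂ) u)) 0 := by
    have hline : HasFDerivAt (fun q : ℂ × ℂ => p + q.1 • t + q.2 • u)
        (.smulRight (.fst ℂ ℂ ℂ) t + .smulRight (.snd ℂ ℂ ℂ) u) 0 :=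
      ((hasFDerivAt_fst.smul_const t).const_add p).add (hasFDerivAt_snd.smul_const u)
    have hGp : HasFDerivAt G (fderiv ℂ G p) (p + (0 : ℂ × ℂ).1 • t + (0 : ℂ × ℂ).2 • u) := by
      simpa using (hG.differentiable one_ne_zero p).hasFDerivAt
    exact hGp.comp 0 hline
  have hinv : (fderiv ℂ g 0 ∘L .inr ℂ ℂ ℂ).IsInvertible :=
    ⟨.unitsEquivAut ℂ (.mk0 _ hu), by ext; simp [hg'.fderiv]⟩
  let ψ := hg.implicitFunction one_ne_zero hinv
  have hψ0 : ψ 0 = 0 := hg.implicitFunction_apply_self one_ne_zero hinv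
  have hψdiff : ∀ᶠ x in nhds 0, DifferentiableAt ℂ ψ x :=
    ((hg.contDiffAt_implicitFunction one_ne_zero hinv).eventually (by simp)).mono
      fun x hx => hx.differentiableAt one_ne_zero
  have hlevel : ∀ᶠ x in nhds 0, g (x, ψ x) = G p := by
    have := hg.eventually_apply_implicitFunction one_ne_zero hinv
    simpa [g] using this
  refine ⟨ψ, hψ0, ?_, hψdiff.and hlevel⟩
  have hcurve : HasDerivAt (fun x => (x, ψ x)) (1, deriv ψ 0) 0 :=
    (hasDerivAt_id _).prodMk hψdiff.self_of_nhds.hasDerivAt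
  have hdg : HasDerivAt (fun x => g (x, ψ x)) (deriv ψ 0 * fderiv ℂ G p u) 0 := by
    rw [show (0 : ℂ × ℂ) = (0, ψ 0) by rw [hψ0]; rfl] at hg'
    simpa [ht, Function.comp_def] using hg'.comp_hasDerivAt 0 hcurve
  have := hdg.unique ((hasDerivAt_const 0 (G p)).congr_of_eventuallyEq hlevel)
  exact (mul_eq_zero.1 this).resolve_right hu

lemma exists_holomorphic_disc_in_level {E : Type*} [NormedAddCommGroup E] [NormedSpace ℂ E]
    {G : E → ℂ} (hG : ContDiff ℂ 1 G) {p t : E} (hdG : fderiv ℂ G p ≠ 0)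
    (ht : fderiv ℂ G p t = 0) (ht0 : t ≠ 0) :
    ∃ (φ : ℂ → E) (r : ℂ), r ≠ 0 ∧ DifferentiableOn ℂ φ (ball 0 1) ∧ InjOn φ (ball 0 1) ∧
      MapsTo φ (ball 0 1) (G ⁻¹' {G p}) ∧ φ 0 = p ∧ deriv φ 0 = r • t := by
  obtain ⟨u, hu⟩ : ∃ u, fderiv ℂ G p u ≠ 0 := by
    by_contra! h
    exact hdG (ContinuousLinearMap.ext h)
  obtain ⟨ψ, hψ0, hψ'0, hψ⟩ := exists_implicit_curve hG ht hu
  obtain ⟨r, hr, hball⟩ := eventually_nhds_iff_ball.1 hψ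
  have hscale : ∀ w ∈ ball (0 : ℂ) 1, (r * w : ℂ) ∈ ball (0 : ℂ) r := fun w hw => by
    simpa [abs_of_pos hr, hr] using hw
  have hrC : (r : ℂ) ≠ 0 := ofReal_ne_zero.2 hr.ne'
  have hψr {w : ℂ} (hw : w ∈ ball 0 1) : DifferentiableAt ℂ (fun w => ψ (r * w)) w :=
    (hball _ (hscale w hw)).1.comp w (by fun_prop)
  refine ⟨fun w => p + (r * w : ℂ) • t + ψ (r * w) • u, r, hrC, fun w hw => ?_, ?_,
    fun w hw => (hball _ (hscale w hw)).2, by simp [hψ0], ?_⟩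
  · have := hψr hw
    exact (DifferentiableAt.add (by fun_prop)
      (this.smul_const u)).differentiableWithinAt
  · intro x _ y _ hxy
    have hψxy : ψ (r * x) = ψ (r * y) := by
      simpa [ht, hu] using congrArg (fderiv ℂ G p) hxy
    simpa [hψxy, hrC, ht0] using hxy
  · have hψr0 : HasDerivAt (fun w => ψ (r * w)) 0 0 := by
      have : HasDerivAt ψ (deriv ψ 0) (r * 0 : ℂ) := by
        simpa using hψ.self_of_nhds.1.hasDerivAt
      simpa [hψ'0, Function.comp_def] using this.comp 0 (hasDerivAt_const_mul (r : ℂ))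
    have hline : HasDerivAt (fun w : ℂ => (r * w : ℂ) • t) ((r : ℂ) • t) 0 := by
      simpa using ((hasDerivAt_id (0 : ℂ)).const_mul (r : ℂ)).smul_const t
    simpa using ((hline.const_add p).fun_add (hψr0.smul_const u)).deriv

lemma lap_const_mul (c : ℝ) (u : ℂ → ℝ) (z : ℂ) : lap (fun w => c * u w) z = c * lap u z := by
  have fderiv_mul (f : ℂ → ℂ) (x e : ℂ) :
      fderiv ℝ (fun w => (c : ℂ) * f w) x e = c * fderiv ℝ f x e :=
    congrArg (· e) (congrFun (fderiv_const_smul_field (𝕜 := ℝ) (c : ℂ) (f := f)) x)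
  have wdbar1_mul : (wdbar1 fun w => ((c * u w : ℝ) : ℂ)) =
      fun w => (c : ℂ) * wdbar1 (fun w => (u w : ℂ)) w := by
    funext w
    simp only [wdbar1, ofReal_mul, fderiv_mul]
    ring
  rw [lap, lap, wdbar1_mul, wd1, wd1, fderiv_mul, fderiv_mul]
  ring

lemma HarmonicAlong.preimage {P : ℂ × ℂ → ℝ} {V : Set (ℂ × ℂ)} (hV : HarmonicAlong P V)
    {Φ : ℂ × ℂ → ℂ × ℂ} (hΦ : Differentiable ℂ Φ) (hinj : Function.Injective Φ) {c : ℝ}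
    (hc : c ≠ 0) (hPΦ : ∀ z, P (Φ z) = c * P z) : HarmonicAlong P (Φ ⁻¹' V) := by
  intro φ hφ hφinj hφV ζ hζ
  have := hV (Φ ∘ φ) (hΦ.comp_differentiableOn hφ) (hinj.comp_injOn hφinj)
    (by rwa [image_comp, image_subset_iff]) ζ hζ
  simp only [Function.comp_apply, hPΦ, lap_const_mul] at this
  exact (mul_eq_zero.1 this).resolve_left (ofReal_ne_zero.2 hc)

variable {P : ℂ × ℂ → ℝ} (hP : ContDiff ℝ 2 P) (hpsh : IsPsh P) {G : ℂ × ℂ → ℂ}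
  (hG : Differentiable ℂ G)
include hP hpsh hG

lemma fderiv_mul_mixedDeriv_comm_of_harmonicAlong (hlevel : ∀ c, HarmonicAlong P (G ⁻¹' {c}))
    (u v w z : ℂ × ℂ) :
    fderiv ℂ G z u * mixedDeriv P v w z = fderiv ℂ G z v * mixedDeriv P u w z := by
  by_cases hdG : fderiv ℂ G z = 0
  · simp [hdG]
  let t := fderiv ℂ G z u • v + (-fderiv ℂ G z v) • u
  suffices mixedDeriv P t w z = 0 by
    simp only [t, mixedDeriv, wd_add_dir, wd_smul_dir] at this
    simp only [mixedDeriv]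
    linear_combination this
  have ht : fderiv ℂ G z t = 0 := by
    simp only [t, map_add, map_smul, smul_eq_mul]
    ring
  rcases eq_or_ne t 0 with ht0 | ht0
  · rw [ht0, mixedDeriv, ← zero_smul ℂ 0, wd_smul_dir, zero_mul]
  obtain ⟨φ, r, hr, hφ, hinj, hmaps, rfl, hφ'⟩ :=
    exists_holomorphic_disc_in_level (contDiff_one_of_differentiable hG) hdG ht ht0
  have levi_zero : leviForm P (φ 0) (r • t) = 0 := by
    have := hlevel _ φ hφ hinj hmaps.image_subset 0 (mem_ball_self one_pos)
    rw [lap_comp_eq_leviForm hP isOpen_ball hφ (mem_ball_self one_pos), hφ'] at this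
    simpa using this
  have := mixedDeriv_eq_zero_of_leviForm_eq_zero hP hpsh levi_zero w
  rw [mixedDeriv, wd_smul_dir] at this
  exact (mul_eq_zero.1 this).resolve_left hr

end LevelCurves

section ParameterDerivatives

variable {E F : Type*} [NormedAddCommGroup E] [NormedSpace ℂ E] [NormedAddCommGroup F]
  [NormedSpace ℂ F] {G : ℂ × E → F} (hG : Differentiable ℂ G)
include hG

lemma deriv_mk_left (z : E) : (deriv fun s => G (s, z)) = fun s => fderiv ℂ G (s, z) (1, 0) :=
  funext fun s => ((hG (s, z)).hasFDerivAt.comp_hasDerivAt s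
    ((hasDerivAt_id s).prodMk (hasDerivAt_const s z))).deriv

lemma fderiv_mk_right_apply (s : ℂ) (z v : E) :
    fderiv ℂ (fun z => G (s, z)) z v = fderiv ℂ G (s, z) (0, v) := by
  have := ((hG (s, z)).hasFDerivAt.comp z (hasFDerivAt_prodMk_right s z)).fderiv
  simpa [Function.comp_def] using congrArg (· v) this

variable [FiniteDimensional ℂ E] [CompleteSpace F]

lemma differentiable_iteratedDeriv_mk_left (n : ℕ) (s : ℂ) :
    Differentiable ℂ fun z => iteratedDeriv n (fun s => G (s, z)) s := by
  induction n generalizing G with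
  | zero =>
    simp only [iteratedDeriv_zero]
    fun_prop
  | succ n ih =>
    simp only [iteratedDeriv_succ', deriv_mk_left hG]
    exact ih (differentiable_fderiv_apply hG (1, 0))

lemma fderiv_iteratedDeriv_mk_left (n : ℕ) (s : ℂ) (z v : E) :
    fderiv ℂ (fun z => iteratedDeriv n (fun s => G (s, z)) s) z v =
      iteratedDeriv n (fun s => fderiv ℂ (fun z => G (s, z)) z v) s := by
  induction n generalizing G with
  | zero => rfl
  | succ n ih =>
    have hG₁ := differentiable_fderiv_apply hG (1, 0)
    have hGv := differentiable_fderiv_apply hG (0, v)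
    simp only [iteratedDeriv_succ', deriv_mk_left hG, ih hG₁, fderiv_mk_right_apply hG,
      fderiv_mk_right_apply hG₁, deriv_mk_left hGv]
    simp only [fderiv_fderiv_apply_comm hG _ (1, 0) (0, v)]

end ParameterDerivatives

section WeightedDilation

/-- The weighted dilation `(sᵃz₁, sᵇz₂)`. The integer exponents allow a complex parameter `s`, so
that it is polynomial in `(s, z)`. -/
def weightedDilation (a b : ℕ) (s : ℂ) (z : ℂ × ℂ) : ℂ × ℂ := (s ^ a * z.1, s ^ b * z.2)

/-- The component of weighted degree `n` of an entire function `H`: the `n`-th Taylor coefficient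
of `s ↦ H (sᵃz₁, sᵇz₂)`. -/
def weightedComponent (a b n : ℕ) (H : ℂ × ℂ → ℂ) (z : ℂ × ℂ) : ℂ :=
  (n.factorial : ℂ)⁻¹ * iteratedDeriv n (fun s => H (weightedDilation a b s z)) 0

lemma differentiable_weightedDilation (a b : ℕ) :
    Differentiable ℂ fun q : ℂ × (ℂ × ℂ) => weightedDilation a b q.1 q.2 := by
  unfold weightedDilation
  fun_prop

variable (a b n : ℕ)

lemma differentiable_weightedDilation_apply (s : ℂ) : Differentiable ℂ (weightedDilation a b s) :=
  (differentiable_weightedDilation a b).comp ((differentiable_const s).prodMk differentiable_id)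

lemma weightedDilation_injective {s : ℂ} (hs : s ≠ 0) :
    Function.Injective (weightedDilation a b s) := fun z w h => by
  simpa [weightedDilation, hs, Prod.ext_iff] using h

lemma weightedDilation_weightedDilation (s t : ℂ) (z : ℂ × ℂ) :
    weightedDilation a b s (weightedDilation a b t z) = weightedDilation a b (t * s) z := by
  simp only [weightedDilation, mul_pow]
  ring_nf

/-- `F` is weighted homogeneous of degree `n` under the complex dilations `(sᵃz₁, sᵇz₂)`, `s = 0`
included. -/
def QuasiHomogeneous (F : ℂ × ℂ → ℂ) : Prop :=
  ∀ s z, F (weightedDilation a b s z) = s ^ n * F z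

variable {H : ℂ × ℂ → ℂ} (hH : Differentiable ℂ H)
include hH

lemma differentiable_weightedOrbit (z : ℂ × ℂ) :
    Differentiable ℂ fun s => H (weightedDilation a b s z) :=
  hH.comp ((differentiable_weightedDilation a b).comp
    (differentiable_id.prodMk (differentiable_const z)))

lemma differentiable_weightedComponent : Differentiable ℂ (weightedComponent a b n H) :=
  (differentiable_iteratedDeriv_mk_left (hH.comp (differentiable_weightedDilation a b)) n 0
    ).const_mul _

lemma quasiHomogeneous_weightedComponent :
    QuasiHomogeneous a b n (weightedComponent a b n H) := by
  intro t z
  have hline := contDiff_of_differentiable (differentiable_weightedOrbit a b hH z) n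
  simp only [weightedComponent, weightedDilation_weightedDilation,
    iteratedDeriv_comp_const_mul hline, mul_zero]
  ring

lemma eq_const_of_weightedComponent_eq_zero (ha : a ≠ 0) (hb : b ≠ 0)
    (h : ∀ n ≠ 0, weightedComponent a b n H = 0) (z : ℂ × ℂ) : H z = H 0 := by
  have taylor := hasSum_taylorSeries_of_entire (differentiable_weightedOrbit a b hH z) 0 1
  have := taylor.unique (hasSum_single 0 fun n hn => by
    simpa [weightedComponent] using congrFun (h n hn) z)
  simpa [weightedDilation, ha, hb, ← Prod.zero_eq_mk] using this

lemma fderiv_weightedComponent_eq_zero {z v : ℂ × ℂ}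
    (h : ∀ s : ℝ, 0 < s → fderiv ℂ (fun z => H (weightedDilation a b s z)) z v = 0) :
    fderiv ℂ (weightedComponent a b n H) z v = 0 := by
  have hG : Differentiable ℂ fun q : ℂ × (ℂ × ℂ) => H (weightedDilation a b q.1 q.2) :=
    hH.comp (differentiable_weightedDilation a b)
  have hentire : Differentiable ℂ fun s : ℂ =>
      fderiv ℂ (fun z => H (weightedDilation a b s z)) z v := by
    have := differentiable_fderiv_apply hG (0, v)
    simp only [← fderiv_mk_right_apply hG] at this
    exact this.comp (differentiable_id.prodMk (differentiable_const z))
  have hzero : (fun s : ℂ => fderiv ℂ (fun z => H (weightedDilation a b s z)) z v) = 0 :=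
    eq_zero_of_differentiable_of_forall_pos hentire h
  have hcoeff := fderiv_iteratedDeriv_mk_left hG n 0 z v
  rw [hzero] at hcoeff
  have hdiff := differentiable_iteratedDeriv_mk_left hG n 0 z
  unfold weightedComponent
  rw [fderiv_const_mul hdiff, smul_apply]
  simp [hcoeff]

end WeightedDilation

section QuasiHomogeneous

/-- The weighted Euler field, the velocity of the curve `s ↦ (sᵃz₁, sᵇz₂)` at `s = 1`. -/
def eulerField (a b : ℕ) (z : ℂ × ℂ) : ℂ × ℂ := (a * z.1, b * z.2)

lemma eulerField_eq (a b : ℕ) (z : ℂ × ℂ) :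
    eulerField a b z = (a * z.1) • (1, 0) + (b * z.2) • (0, 1) := by
  simp [eulerField]

lemma eq_zero_of_deriv_mul_eq_mul {p α β : ℂ → ℂ} {z : ℂ} (hp : AnalyticAt ℂ p z) (hpz : p z = 0)
    (hne : ¬ p =ᶠ[nhds z] 0) (hα : ContinuousAt α z) (hβ : ContinuousAt β z)
    (h : ∀ y, deriv p y * β y = p y * α y) : β z = 0 := by
  have hp_ne : ∀ᶠ y in nhdsWithin z {z}ᶜ, p y ≠ 0 :=
    hp.eventually_eq_zero_or_eventually_ne_zero.resolve_left hne
  -- `p' / p` has a pole at every zero of `p`.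
  have horder : meromorphicOrderAt (logDeriv p) z = -1 := by
    refine meromorphicOrderAt_logDeriv_eq_neg_one hp.meromorphicAt ?_
      ((meromorphicOrderAt_ne_top_iff_eventually_ne_zero hp.meromorphicAt).2 hp_ne)
    rw [hp.meromorphicOrderAt_eq]
    simpa using hp.analyticOrderAt_ne_zero.2 hpz
  have hpole : Filter.Tendsto (logDeriv p) (nhdsWithin z {z}ᶜ) (Bornology.cobounded ℂ) :=
    tendsto_cobounded_of_meromorphicOrderAt_neg (by rw [horder]; decide)
  have hβ_eq : (fun y => α y * (logDeriv p y)⁻¹) =ᶠ[nhdsWithin z {z}ᶜ] β := by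
    filter_upwards [hp_ne, hpole.eventually_ne_cobounded 0] with y hy hlog
    rw [mul_inv_eq_iff_eq_mul₀ hlog, logDeriv_apply, mul_div_assoc', eq_div_iff hy]
    linear_combination -h y
  have hlim := (hα.tendsto.mono_left nhdsWithin_le_nhds).mul
    (Filter.tendsto_inv₀_cobounded.comp hpole)
  rw [mul_zero] at hlim
  exact tendsto_nhds_unique (hβ.tendsto.mono_left nhdsWithin_le_nhds) (hlim.congr' hβ_eq)

lemma eq_zero_of_fderiv_mul_eq_mul {E : Type*} [NormedAddCommGroup E] [NormedSpace ℂ E]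
    {F β : E → ℂ} {α : E → E → ℂ} (hF : Differentiable ℂ F) (hF0 : F ≠ 0)
    (hα : ∀ u, Continuous (α u)) (hβ : Continuous β)
    (h : ∀ u z, fderiv ℂ F z u * β z = F z * α u z) {z : E} (hz : F z = 0) : β z = 0 := by
  obtain ⟨x, hx⟩ := Function.ne_iff.1 hF0
  let γ : ℂ → E := AffineMap.lineMap z x
  have hγ : Continuous γ := AffineMap.lineMap_continuous
  have hderiv (y : ℂ) : HasDerivAt (F ∘ γ) (fderiv ℂ F (γ y) (x - z)) y :=
    (hF _).hasFDerivAt.comp_hasDerivAt y AffineMap.hasDerivAt_lineMap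
  have hline : Differentiable ℂ (F ∘ γ) := fun y => (hderiv y).differentiableAt
  have hne : ¬ F ∘ γ =ᶠ[nhds 0] 0 := fun hev => hx <| by
    simpa [γ] using congrFun (eq_zero_of_differentiable_of_eventuallyEq_zero hline hev) 1
  simpa [γ] using eq_zero_of_deriv_mul_eq_mul (β := β ∘ γ) (hline.analyticAt 0) (by simpa [γ]) hne
    ((hα (x - z)).comp hγ).continuousAt (hβ.comp hγ).continuousAt
    fun y => by simpa only [(hderiv y).deriv, Function.comp_apply] using h (x - z) (γ y)

lemma hasDerivAt_weightedDilation (a b : ℕ) (z : ℂ × ℂ) :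
    HasDerivAt (fun s => weightedDilation a b s z) (eulerField a b z) 1 := by
  have hcoord (k : ℕ) (x : ℂ) : HasDerivAt (fun s : ℂ => s ^ k * x) (k * x) 1 := by
    simpa using (hasDerivAt_pow k (1 : ℂ)).mul_const x
  exact (hcoord a z.1).prodMk (hcoord b z.2)

lemma hasStrictFDerivAt_weightedDilation_curve (a b : ℕ) {φ : ℂ → ℂ × ℂ} {ζ : ℂ} {t : ℂ × ℂ}
    (hφ : HasStrictDerivAt φ t ζ) :
    HasStrictFDerivAt (fun q : ℂ × ℂ => weightedDilation a b q.1 (φ q.2))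
      (.toSpanSingleton ℂ (eulerField a b (φ ζ)) ∘L .fst ℂ ℂ ℂ +
        .toSpanSingleton ℂ t ∘L .snd ℂ ℂ ℂ) (1, ζ) := by
  have hpow (k : ℕ) : HasStrictFDerivAt (fun q : ℂ × ℂ => q.1 ^ k)
      ((k : ℂ) • .fst ℂ ℂ ℂ) (1, ζ) := by
    simpa using (hasStrictFDerivAt_fst (𝕜 := ℂ) (p := ((1, ζ) : ℂ × ℂ))).pow k
  have hφ' : HasStrictFDerivAt (fun q : ℂ × ℂ => φ q.2)
      (.toSpanSingleton ℂ t ∘L .snd ℂ ℂ ℂ) (1, ζ) :=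
    hφ.hasStrictFDerivAt.comp (1, ζ) hasStrictFDerivAt_snd
  refine (((hpow a).mul hφ'.fst).prodMk ((hpow b).mul hφ'.snd)).congr_fderiv ?_
  ext <;> simp [eulerField, mul_comm]

lemma exists_smul_add_smul_eq {K : Type*} [Field K] {x y : K × K} (h : x.1 * y.2 ≠ x.2 * y.1)
    (v : K × K) : ∃ σ τ : K, σ • x + τ • y = v := by
  let d := x.1 * y.2 - x.2 * y.1
  have hd : d ≠ 0 := sub_ne_zero.2 h
  refine ⟨(v.1 * y.2 - v.2 * y.1) / d, (x.1 * v.2 - x.2 * v.1) / d, ?_⟩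
  ext <;> simp only [Prod.fst_add, Prod.snd_add, Prod.smul_fst, Prod.smul_snd, smul_eq_mul] <;>
    field_simp <;> ring

lemma eventually_nhds_of_eventually_weightedDilation {a b : ℕ} {φ : ℂ → ℂ × ℂ} {ζ : ℂ}
    {t : ℂ × ℂ} (hφ : HasStrictDerivAt φ t ζ)
    (hdet : t.1 * (eulerField a b (φ ζ)).2 ≠ t.2 * (eulerField a b (φ ζ)).1)
    {p : ℂ × ℂ → Prop} (hp : ∀ᶠ w in nhds ζ, ∀ s, p (weightedDilation a b s (φ w))) :
    ∀ᶠ z in nhds (φ ζ), p z := by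
  have hmap := (hasStrictFDerivAt_weightedDilation_curve a b hφ).map_nhds_eq_of_surj <|
    LinearMap.range_eq_top.2 fun v => by
      obtain ⟨τ, σ, rfl⟩ := exists_smul_add_smul_eq hdet v
      exact ⟨(σ, τ), by simp [add_comm]⟩
  rw [show φ ζ = weightedDilation a b 1 (φ ζ) by simp [weightedDilation], ← hmap,
    Filter.eventually_map, nhds_prod_eq]
  exact (hp.prod_inr _).mono fun q hq => hq q.1

lemma eq_of_pow_mul_eq {f g : ℂ → ℂ} (hf : Continuous f) (hg : Continuous g) {k : ℕ}
    (h : ∀ s, s ^ k * f s = s ^ k * g s) : f = g :=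
  hf.ext_on (dense_compl_singleton 0) hg fun s hs => mul_left_cancel₀ (pow_ne_zero k hs) (h s)

variable {a b n : ℕ} {F : ℂ × ℂ → ℂ} (hF : Differentiable ℂ F) (hhom : QuasiHomogeneous a b n F)
include hF hhom

lemma QuasiHomogeneous.fderiv_eulerField (z : ℂ × ℂ) :
    fderiv ℂ F z (eulerField a b z) = n * F z := by
  have hone : weightedDilation a b 1 z = z := by simp [weightedDilation]
  have hchain : HasDerivAt (fun s => F (weightedDilation a b s z))
      (fderiv ℂ F z (eulerField a b z)) 1 := by
    have := (hF (weightedDilation a b 1 z)).hasFDerivAt.comp_hasDerivAt 1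
      (hasDerivAt_weightedDilation a b z)
    rwa [hone] at this
  have hpow : HasDerivAt (fun s => F (weightedDilation a b s z)) (n * F z) 1 := by
    simpa [funext fun s => hhom s z] using (hasDerivAt_pow n (1 : ℂ)).mul_const (F z)
  exact hchain.unique hpow

lemma QuasiHomogeneous.fderiv_weightedDilation (s : ℂ) (z v : ℂ × ℂ) :
    fderiv ℂ F (weightedDilation a b s z) (weightedDilation a b s v) = s ^ n * fderiv ℂ F z v := by
  have hlin (y : ℂ) : weightedDilation a b s z + y • weightedDilation a b s v =
      weightedDilation a b s (z + y • v) := by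
    ext <;> simp [weightedDilation] <;> ring
  have hline : DifferentiableAt ℂ (fun y : ℂ => F (z + y • v)) 0 := by fun_prop
  rw [← (hF _).lineDeriv_eq_fderiv, ← (hF _).lineDeriv_eq_fderiv, lineDeriv, lineDeriv]
  simp only [hlin, hhom s]
  exact deriv_const_mul _ hline

section HomogeneousDirection

variable {c : ℕ} {e : ℂ × ℂ} (he : ∀ s, weightedDilation a b s e = s ^ c • e)
include he

lemma QuasiHomogeneous.fderiv_apply (hc : c ≤ n) :
    QuasiHomogeneous a b (n - c) fun z => fderiv ℂ F z e := by
  intro s z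
  have hcont := (differentiable_weightedOrbit a b (differentiable_fderiv_apply hF e) z).continuous
  refine congrFun (eq_of_pow_mul_eq (g := fun s => s ^ (n - c) * _) hcont (by fun_prop) (k := c)
    fun s => ?_) s
  have := hhom.fderiv_weightedDilation hF s z e
  rwa [he, map_smul, smul_eq_mul, ← pow_mul_pow_sub s hc, mul_assoc] at this

lemma QuasiHomogeneous.fderiv_apply_eq_zero (hc : n < c) (z : ℂ × ℂ) : fderiv ℂ F z e = 0 := by
  have hcont := (differentiable_weightedOrbit a b (differentiable_fderiv_apply hF e) z).continuous
  have := congrFun (eq_of_pow_mul_eq (f := fun s => s ^ (c - n) * _) (g := fun _ => fderiv ℂ F z e)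
    ((continuous_pow _).mul hcont) continuous_const (k := n) fun s => ?_) 0
  · simpa [(Nat.sub_pos_of_lt hc).ne'] using this.symm
  have := hhom.fderiv_weightedDilation hF s z e
  rwa [he, map_smul, smul_eq_mul, ← pow_mul_pow_sub s hc.le, mul_assoc] at this

end HomogeneousDirection

lemma QuasiHomogeneous.isPolyMap2 (ha : a ≠ 0) (hb : b ≠ 0) : IsPolyMap2 F := by
  induction n using Nat.strong_induction_on generalizing F with | _ n ih =>
  rcases eq_or_ne n 0 with rfl | hn
  · refine ⟨.C (F 0), fun z => ?_⟩
    simpa [weightedDilation, ha, hb, ← Prod.zero_eq_mk, eq_comm] using hhom 0 z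
  have partial_poly {c : ℕ} {e : ℂ × ℂ} (hc : c ≠ 0)
      (he : ∀ s, weightedDilation a b s e = s ^ c • e) : IsPolyMap2 fun z => fderiv ℂ F z e := by
    rcases le_or_gt c n with hcn | hcn
    · exact ih (n - c) (by lia) (differentiable_fderiv_apply hF e) (hhom.fderiv_apply hF he hcn)
    · exact ⟨0, fun z => by simpa using hhom.fderiv_apply_eq_zero hF he hcn z⟩
  obtain ⟨Q₁, hQ₁⟩ := partial_poly (e := (1, 0)) ha fun s => by simp [weightedDilation]
  obtain ⟨Q₂, hQ₂⟩ := partial_poly (e := (0, 1)) hb fun s => by simp [weightedDilation]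
  refine ⟨.C (n : ℂ)⁻¹ * (.C (a : ℂ) * .X 0 * Q₁ + .C (b : ℂ) * .X 1 * Q₂), fun z => ?_⟩
  have heuler := hhom.fderiv_eulerField hF z
  rw [eulerField_eq, map_add, map_smul, map_smul, smul_eq_mul, smul_eq_mul] at heuler
  simp only [map_add, map_mul, MvPolynomial.eval_C, MvPolynomial.eval_X, ← hQ₁, ← hQ₂,
    Matrix.cons_val_zero, Matrix.cons_val_one, heuler]
  rw [inv_mul_cancel_left₀ (Nat.cast_ne_zero.2 hn)]

lemma QuasiHomogeneous.tangent_parallel_eulerField (hF0 : F ≠ 0) {φ : ℂ → ℂ × ℂ} {ζ : ℂ}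
    {t : ℂ × ℂ} (hφ : HasStrictDerivAt φ t ζ) (hzero : ∀ᶠ w in nhds ζ, F (φ w) = 0) :
    t.1 * (eulerField a b (φ ζ)).2 = t.2 * (eulerField a b (φ ζ)).1 := by
  by_contra hdet
  refine hF0 (eq_zero_of_differentiable_of_eventuallyEq_zero hF
    (eventually_nhds_of_eventually_weightedDilation hφ hdet (hzero.mono fun w hw s => ?_)))
  rw [hhom, hw, mul_zero, Pi.zero_apply]

end QuasiHomogeneous

section HarmonicOnLevels

lemma exists_smul_eq_of_mul_eq_mul {K : Type*} [Field K] {x y : K × K} (hx : x ≠ 0)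
    (h : y.1 * x.2 = y.2 * x.1) : ∃ k : K, k • x = y := by
  rcases eq_or_ne x.1 0 with h₁ | h₁
  · have h₂ : x.2 ≠ 0 := fun h₂ => hx (Prod.ext h₁ h₂)
    refine ⟨y.2 / x.2, Prod.ext ?_ (div_mul_cancel₀ _ h₂)⟩
    rw [h₁, mul_zero] at h
    simp [h₁, (mul_eq_zero.1 h).resolve_right h₂]
  · refine ⟨y.1 / x.1, Prod.ext (div_mul_cancel₀ _ h₁) ?_⟩
    rw [Prod.smul_snd, smul_eq_mul, div_mul_eq_mul_div, h, mul_div_cancel_right₀ _ h₁]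

lemma continuousOn_leviForm {P : ℂ × ℂ → ℝ} (hP : ContDiff ℝ 2 P) {X : Type*}
    [TopologicalSpace X] {U : Set X} {φ v : X → ℂ × ℂ} (hφ : ContinuousOn φ U)
    (hv : ContinuousOn v U) :
    ContinuousOn (fun x => leviForm P (φ x) (v x)) U := by
  have hcont (i j : ℂ × ℂ) : ContinuousOn (fun x => mixedDeriv P i j (φ x)) U :=
    (continuous_mixedDeriv hP i j).comp_continuousOn hφ
  unfold leviForm
  fun_prop

variable {P : ℂ × ℂ → ℝ} (hP : ContDiff ℝ 2 P) {a b n : ℕ} {F : ℂ × ℂ → ℂ}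
  (hF : Differentiable ℂ F) (hhom : QuasiHomogeneous a b n F) (hF0 : F ≠ 0)
  (hcomm : ∀ u v w z, fderiv ℂ F z u * mixedDeriv P v w z = fderiv ℂ F z v * mixedDeriv P u w z)
include hP hF hhom hF0 hcomm

lemma QuasiHomogeneous.mixedDeriv_eulerField_eq_zero {z : ℂ × ℂ} (hz : F z = 0) (w : ℂ × ℂ) :
    mixedDeriv P (eulerField a b z) w z = 0 := by
  have hsplit (z : ℂ × ℂ) : mixedDeriv P (eulerField a b z) w z =
      a * z.1 * mixedDeriv P (1, 0) w z + b * z.2 * mixedDeriv P (0, 1) w z := by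
    simp only [eulerField_eq, mixedDeriv, wd_add_dir, wd_smul_dir]
  have hcont := continuous_mixedDeriv hP
  refine eq_zero_of_fderiv_mul_eq_mul (β := fun z => mixedDeriv P (eulerField a b z) w z)
    (α := fun u z => n * mixedDeriv P u w z) hF hF0 (by fun_prop) ?_ (fun u z => ?_) hz
  · simp only [hsplit]
    fun_prop
  · rw [hcomm, hhom.fderiv_eulerField hF]
    ring

variable (ha : a ≠ 0) (hb : b ≠ 0) (hn : n ≠ 0)
include ha hb hn

lemma QuasiHomogeneous.mixedDeriv_eq_zero_of_tangent {z t : ℂ × ℂ} (hz : z ≠ 0)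
    (ht : fderiv ℂ F z t = 0)
    (ht' : F z = 0 → t.1 * (eulerField a b z).2 = t.2 * (eulerField a b z).1) (w : ℂ × ℂ) :
    mixedDeriv P t w z = 0 := by
  by_cases hFz : F z = 0
  · have hE := hhom.mixedDeriv_eulerField_eq_zero hP hF hF0 hcomm hFz w
    have hE0 : eulerField a b z ≠ 0 := by
      simpa [eulerField, ha, hb, Prod.ext_iff] using hz
    obtain ⟨k, rfl⟩ := exists_smul_eq_of_mul_eq_mul hE0 (ht' hFz)
    rw [mixedDeriv, wd_smul_dir]
    exact mul_eq_zero_of_right k hE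
  · have hdE : fderiv ℂ F z (eulerField a b z) ≠ 0 := by
      rw [hhom.fderiv_eulerField hF]
      exact mul_ne_zero (Nat.cast_ne_zero.2 hn) hFz
    have := hcomm (eulerField a b z) t w z
    rw [ht, zero_mul] at this
    exact (mul_eq_zero.1 this).resolve_left hdE

lemma QuasiHomogeneous.harmonicAlong_preimage (c : ℂ) : HarmonicAlong P (F ⁻¹' {c}) := by
  intro φ hφ hinj hsub
  have hlevel : ∀ w ∈ ball 0 1, F (φ w) = c := image_subset_iff.1 hsub
  have hφd {w : ℂ} (hw : w ∈ ball 0 1) : DifferentiableAt ℂ φ w :=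
    hφ.differentiableAt (isOpen_ball.mem_nhds hw)
  have regular {w : ℂ} (hw : w ∈ ball 0 1) (hw0 : φ w ≠ 0) :
      leviForm P (φ w) (deriv φ w) = 0 := by
    have hev : ∀ᶠ y in nhds w, F (φ y) = c :=
      Filter.eventually_of_mem (isOpen_ball.mem_nhds hw) hlevel
    rw [leviForm_eq_mixedDeriv hP]
    refine hhom.mixedDeriv_eq_zero_of_tangent hP hF hF0 hcomm ha hb hn hw0 ?_ (fun h0 => ?_) _
    · exact ((hF _).hasFDerivAt.comp_hasDerivAt w (hφd hw).hasDerivAt).unique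
        ((hasDerivAt_const w c).congr_of_eventuallyEq hev)
    · rw [hlevel w hw] at h0
      exact hhom.tangent_parallel_eulerField hF hF0
        (hφ.analyticAt (isOpen_ball.mem_nhds hw)).hasStrictDerivAt (h0 ▸ hev)
  intro ζ hζ
  rw [lap_comp_eq_leviForm hP isOpen_ball hφ hζ]
  refine mul_eq_zero_of_right 4 ?_
  rcases ne_or_eq (φ ζ) 0 with h0 | h0
  · exact regular hζ h0
  -- `φ` is injective, so it passes through the origin at `ζ` only.
  · have hnhds := isOpen_ball.mem_nhds hζ
    have hcont := (continuousOn_leviForm hP hφ.continuousOn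
      (hφ.deriv isOpen_ball).continuousOn).continuousAt hnhds
    refine tendsto_nhds_unique (hcont.tendsto.mono_left (nhdsWithin_le_nhds (s := {ζ}ᶜ)))
      (tendsto_const_nhds.congr' ?_)
    filter_upwards [self_mem_nhdsWithin, nhdsWithin_le_nhds hnhds] with w hw hwb
    exact (regular hwb fun hw0 => hw (hinj hwb hζ (hw0.trans h0.symm))).symm

end HarmonicOnLevels

section WeightedPotential

variable {m₁ m₂ : ℕ} (hm₁ : m₁ ≠ 0) (hm₂ : m₂ ≠ 0)
include hm₁ hm₂

lemma wdil_pow_mul {s : ℝ} (hs : 0 ≤ s) (z : ℂ × ℂ) :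
    wdil m₁ m₂ (s ^ (m₁ * m₂)) z = weightedDilation m₂ m₁ s z := by
  have h₁ : (s ^ (m₁ * m₂)) ^ (m₁ : ℝ)⁻¹ = s ^ m₂ := by
    rw [mul_comm, pow_mul, Real.pow_rpow_inv_natCast (by positivity) hm₁]
  have h₂ : (s ^ (m₁ * m₂)) ^ (m₂ : ℝ)⁻¹ = s ^ m₁ := by
    rw [pow_mul, Real.pow_rpow_inv_natCast (by positivity) hm₂]
  simp [wdil, weightedDilation, h₁, h₂]

lemma QuasiHomogeneous.apply_wdil {n : ℕ} {F : ℂ × ℂ → ℂ} (hF : QuasiHomogeneous m₂ m₁ n F) {t : ℝ}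
    (ht : 0 < t) (z : ℂ × ℂ) :
    F (wdil m₁ m₂ t z) = ((t ^ ((n / (m₁ * m₂) : ℚ) : ℝ) : ℝ) : ℂ) * F z := by
  let s := t ^ ((m₁ * m₂ : ℕ) : ℝ)⁻¹
  have hst : s ^ (m₁ * m₂) = t := Real.rpow_inv_natCast_pow ht.le (mul_ne_zero hm₁ hm₂)
  have hsn : s ^ n = t ^ ((n / (m₁ * m₂) : ℚ) : ℝ) := by
    rw [← Real.rpow_mul_natCast ht.le]
    push_cast
    ring_nf
  rw [← hsn, ofReal_pow, ← hF, ← wdil_pow_mul hm₁ hm₂ (by positivity), hst]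

variable {P : ℂ × ℂ → ℝ} {r : ℝ} (hhom : WHomog m₁ m₂ P r) {H : ℂ × ℂ → ℂ}
  (hlevel : ∀ c, HarmonicAlong P (H ⁻¹' {c}))
include hhom hlevel

lemma harmonicAlong_preimage_comp_weightedDilation {s : ℝ} (hs : 0 < s) (c : ℂ) :
    HarmonicAlong P ((fun z => H (weightedDilation m₂ m₁ s z)) ⁻¹' {c}) := by
  have hscale : (s ^ (m₁ * m₂)) ^ r ≠ 0 := (Real.rpow_pos_of_pos (pow_pos hs _) r).ne'
  refine (hlevel c).preimage (differentiable_weightedDilation_apply m₂ m₁ s)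
    (weightedDilation_injective m₂ m₁ (ofReal_ne_zero.2 hs.ne')) hscale fun z => ?_
  rw [← wdil_pow_mul hm₁ hm₂ hs.le, hhom _ (pow_pos hs _)]

lemma fderiv_weightedComponent_mul_mixedDeriv_comm (hP : ContDiff ℝ 2 P) (hpsh : IsPsh P)
    (hH : Differentiable ℂ H) (n : ℕ) (u v w z : ℂ × ℂ) :
    fderiv ℂ (weightedComponent m₂ m₁ n H) z u * mixedDeriv P v w z =
      fderiv ℂ (weightedComponent m₂ m₁ n H) z v * mixedDeriv P u w z := by
  have hker : fderiv ℂ (weightedComponent m₂ m₁ n H) z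
      (mixedDeriv P v w z • u - mixedDeriv P u w z • v) = 0 := by
    refine fderiv_weightedComponent_eq_zero m₂ m₁ n hH fun s hs => ?_
    have hHs : Differentiable ℂ fun z => H (weightedDilation m₂ m₁ s z) :=
      hH.comp (differentiable_weightedDilation_apply m₂ m₁ s)
    have := fderiv_mul_mixedDeriv_comm_of_harmonicAlong hP hpsh hHs
      (harmonicAlong_preimage_comp_weightedDilation hm₁ hm₂ hhom hlevel hs) u v w z
    rw [map_sub, map_smul, map_smul, smul_eq_mul, smul_eq_mul]
    linear_combination this
  rw [map_sub, map_smul, map_smul, smul_eq_mul, smul_eq_mul] at hker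
  linear_combination hker

end WeightedPotential

lemma contDiff_of_isRealPoly2_s6 {P : ℂ × ℂ → ℝ} (hP : IsRealPoly2 P) {n : WithTop ℕ∞} :
    ContDiff ℝ n P := by
  obtain ⟨Q, hQ⟩ := hP
  have hcoord (i : Fin 4) : ContDiff ℝ n
      fun z : ℂ × ℂ => (![z.1, conj z.1, z.2, conj z.2] : Fin 4 → ℂ) i := by
    have := conjCLE.contDiff (n := n)
    fin_cases i
    exacts [contDiff_fst, this.comp contDiff_fst, contDiff_snd, this.comp contDiff_snd]
  have hPQ : P = fun z => reCLM (MvPolynomial.eval ![z.1, conj z.1, z.2, conj z.2] Q) :=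
    funext fun z => by rw [← hQ, reCLM_apply, ofReal_re]
  rw [hPQ]
  simp only [MvPolynomial.eval_eq']
  exact reCLM.contDiff.comp (.sum fun m _ => contDiff_const.mul
    (contDiff_prod fun i _ => (hcoord i).pow _))

theorem homogeneous_levels_general {m₁ m₂ : ℕ} (hm₁ : m₁ ≠ 0) (hm₂ : m₂ ≠ 0) {P : ℂ × ℂ → ℝ}
    (hP : ContDiff ℝ 2 P) (hpsh : IsPsh P) {r : ℝ} (hhom : WHomog m₁ m₂ P r) (hB : PropertyB P) :
    ∃ (qs : ℚ) (F : ℂ × ℂ → ℂ), IsPolyMap2 F ∧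
      (∀ t : ℝ, 0 < t → ∀ z : ℂ × ℂ,
        F (wdil m₁ m₂ t z) = ((t ^ (qs : ℝ) : ℝ) : ℂ) * F z) ∧
      ∀ c : ℂ, HarmonicAlong P (F ⁻¹' {c}) := by
  obtain ⟨H, hH, hlevel⟩ := hB
  by_cases hconst : ∀ n ≠ 0, weightedComponent m₂ m₁ n H = 0
  · have hHc := eq_const_of_weightedComponent_eq_zero m₂ m₁ hH hm₂ hm₁ hconst
    refine ⟨0, fun _ => 0, ⟨0, by simp⟩, by simp, fun c φ hφ hinj _ => ?_⟩
    exact hlevel (H 0) φ hφ hinj (image_subset_iff.2 fun x _ => hHc (φ x))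
  · push Not at hconst
    obtain ⟨n, hn, hF0⟩ := hconst
    have hF := differentiable_weightedComponent m₂ m₁ n hH
    have hFhom := quasiHomogeneous_weightedComponent m₂ m₁ n hH
    refine ⟨n / (m₁ * m₂), weightedComponent m₂ m₁ n H, hFhom.isPolyMap2 hF hm₂ hm₁,
      fun t ht => hFhom.apply_wdil hm₁ hm₂ ht, ?_⟩
    exact hFhom.harmonicAlong_preimage hP hF hF0
      (fderiv_weightedComponent_mul_mixedDeriv_comm hm₁ hm₂ hhom hlevel hP hpsh hH n) hm₂ hm₁ hn

/-- Lemma 3.2: if an `(m₁,m₂)`-homogeneous plurisubharmonic,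
non-pluriharmonic polynomial has Property (B), the entire function can be taken to
be an `(m₁,m₂)`-homogeneous holomorphic polynomial of some weight `q*`. -/
theorem homogeneous_levels (m₁ m₂ : ℕ) (hm₁ : 0 < m₁) (hm₂ : 0 < m₂) (P : ℂ × ℂ → ℝ)
    (hpoly : IsRealPoly2 P) (hpsh : IsPsh P) (hnph : ¬ IsPluriharmonic P)
    (hhom : WHomog m₁ m₂ P 1) (hB : PropertyB P) :
    ∃ (qs : ℚ) (F : ℂ × ℂ → ℂ), IsPolyMap2 F ∧
      (∀ t : ℝ, 0 < t → ∀ z : ℂ × ℂ,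
        F (wdil m₁ m₂ t z) = ((t ^ (qs : ℝ) : ℝ) : ℂ) * F z) ∧
      ∀ c : ℂ, HarmonicAlong P (F ⁻¹' {c}) :=
  homogeneous_levels_general hm₁.ne' hm₂.ne' (contDiff_of_isRealPoly2_s6 hpoly) hpsh hhom hB

end
end

section
/- Let P be a plurisubharmonic real polynomial on C², homogeneous of degree 2k, such that the function z ↦ P(z, 0) is subharmonic and non-harmonic on C. Then the set {ζ ∈ C : the function w ↦ P(ζw, w) is harmonic on C} is bounded. -/
/-!
For a `C²` function `P` on a complex normed space, the directions `v` along which `w ↦ P (w v)` is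
harmonic form a closed set, because the Laplacian of this function at `w` is
`D²P(w v)(v, v) + D²P(w v)(i v, i v)`, which is continuous in `v`. This set is also stable under
nonzero complex multiples. The direction `(ζ, 1)` is `ζ` times `(1, ζ⁻¹)`, and `(1, ζ⁻¹)` tends to
`(1, 0)` as `|ζ| → ∞`. Since `(1, 0)` lies outside the closed set, so does `(ζ, 1)` for all
large `|ζ|`.
-/

open Complex ComplexConjugate Metric Set

noncomputable section

open scoped Topology InnerProductSpace ContDiff
open Filter InnerProductSpace Laplacian

lemma IsRealPoly2.contDiff {P : ℂ × ℂ → ℝ} (hP : IsRealPoly2 P) {n : ℕ∞ω} : ContDiff ℝ n P := by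
  obtain ⟨Q, hQ⟩ := hP
  have hcoord (i : Fin 4) :
      AnalyticOnNhd ℝ (fun z : ℂ × ℂ => ![z.1, conj z.1, z.2, conj z.2] i) univ := by
    fin_cases i
    · exact analyticOnNhd_fst
    · exact (conjCLE.toContinuousLinearMap ∘L .fst ℝ ℂ ℂ).analyticOnNhd _
    · exact analyticOnNhd_snd
    · exact (conjCLE.toContinuousLinearMap ∘L .snd ℝ ℂ ℂ).analyticOnNhd _
  have hre : P = reCLM ∘ fun z => MvPolynomial.aeval ![z.1, conj z.1, z.2, conj z.2] Q := by
    funext z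
    simp [← hQ]
  rw [hre]
  exact reCLM.contDiff.comp (AnalyticOnNhd.aeval_mvPolynomial hcoord Q).contDiff

lemma fderiv_eq_wd1_mul_add_wdbar1_mul (f : ℂ → ℂ) (z e : ℂ) :
    fderiv ℝ f z e = wd1 f z * e + wdbar1 f z * conj e := by
  have real_linear : fderiv ℝ f z e = e.re * fderiv ℝ f z 1 + e.im * fderiv ℝ f z I := by
    have he : e = e.re • (1 : ℂ) + e.im • I := by simp [re_add_im]
    conv_lhs => rw [he, map_add, map_smul, map_smul]
    simp only [real_smul]
  rw [real_linear, wd1, wdbar1, re_eq_add_conj, im_eq_sub_conj]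
  field_simp
  linear_combination (fderiv ℝ f z I * (e - conj e)) * I_sq

lemma fderiv_comp_const_mul (f : ℂ → ℂ) (c z e : ℂ) :
    fderiv ℝ (fun w => f (c * w)) z e = fderiv ℝ f (c * z) (c * e) := by
  rcases eq_or_ne c 0 with rfl | hc
  · simp
  · let mulLeft : ℂ ≃L[ℝ] ℂ := .smulLeft (Units.mk0 c hc)
    exact DFunLike.congr_fun (mulLeft.comp_right_fderiv (f := f) (x := z)) e

lemma wd1_comp_const_mul (f : ℂ → ℂ) (c z : ℂ) :
    wd1 (fun w => f (c * w)) z = c * wd1 f (c * z) := by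
  rw [wd1, fderiv_comp_const_mul, fderiv_comp_const_mul,
    fderiv_eq_wd1_mul_add_wdbar1_mul, fderiv_eq_wd1_mul_add_wdbar1_mul]
  simp only [mul_one, map_mul, conj_I]
  linear_combination (-(1 / 2) * (c * wd1 f (c * z) - conj c * wdbar1 f (c * z))) * I_sq

lemma wdbar1_comp_const_mul (f : ℂ → ℂ) (c z : ℂ) :
    wdbar1 (fun w => f (c * w)) z = conj c * wdbar1 f (c * z) := by
  rw [wdbar1, fderiv_comp_const_mul, fderiv_comp_const_mul,
    fderiv_eq_wd1_mul_add_wdbar1_mul, fderiv_eq_wd1_mul_add_wdbar1_mul]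
  simp only [mul_one, map_mul, conj_I]
  linear_combination (1 / 2 * (c * wd1 f (c * z) - conj c * wdbar1 f (c * z))) * I_sq

lemma wd1_const_mul (a : ℂ) (f : ℂ → ℂ) (z : ℂ) : wd1 (fun w => a * f w) z = a * wd1 f z := by
  have h : fderiv ℝ (fun w => a * f w) z = a • fderiv ℝ f z :=
    congrFun (fderiv_const_smul_field (f := f) a) z
  simp only [wd1, h, smul_apply, smul_eq_mul]
  ring

lemma lap_comp_const_mul (u : ℂ → ℝ) (c z : ℂ) :
    lap (fun w => u (c * w)) z = c * conj c * lap u (c * z) := by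
  have hbar : (wdbar1 fun w => (u (c * w) : ℂ)) =
      fun w => conj c * wdbar1 (fun w => (u w : ℂ)) (c * w) :=
    funext (wdbar1_comp_const_mul (fun w => (u w : ℂ)) c)
  rw [lap, hbar, wd1_const_mul, wd1_comp_const_mul, lap]
  ring

lemma isHarmonic_comp_const_mul_iff (u : ℂ → ℝ) {c : ℂ} (hc : c ≠ 0) :
    IsHarmonic (fun w => u (c * w)) ↔ IsHarmonic u := by
  simp only [IsHarmonic, lap_comp_const_mul, mul_eq_zero, hc, map_eq_zero, false_or]
  exact ((mul_left_surjective₀ hc).forall (p := fun z => lap u z = 0)).symm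

lemma lap_eq_laplacian {u : ℂ → ℝ} (hu : ContDiff ℝ 2 u) (z : ℂ) : lap u z = (Δ u z : ℝ) := by
  have hdiff : Differentiable ℝ (fderiv ℝ u) :=
    (hu.fderiv_right (m := 1) le_rfl).differentiable one_ne_zero
  have hbar : (wdbar1 fun w => (u w : ℂ)) =
      fun w => (1 / 2) * ((fderiv ℝ u w 1 : ℂ) + I * (fderiv ℝ u w I : ℂ)) := by
    funext w
    have : fderiv ℝ (fun w => (u w : ℂ)) w = ofRealCLM ∘L fderiv ℝ u w :=
      (ofRealCLM.hasFDerivAt.comp w (hu.differentiable two_ne_zero w).hasFDerivAt).fderiv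
    simp [wdbar1, this]
  have symm : fderiv ℝ (fderiv ℝ u) z I 1 = fderiv ℝ (fderiv ℝ u) z 1 I :=
    hu.contDiffAt.isSymmSndFDerivAt (by simp) I 1
  have hpartial (e : ℂ) : HasFDerivAt (fun w => (fderiv ℝ u w e : ℂ))
      (ofRealCLM ∘L (fderiv ℝ (fderiv ℝ u) z).flip e) z :=
    ofRealCLM.hasFDerivAt.comp z <| by
      simpa using (hdiff z).hasFDerivAt.clm_apply (hasFDerivAt_const e z)
  have hsnd : HasFDerivAt (wdbar1 fun w => (u w : ℂ)) _ z :=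
    hbar ▸ ((hpartial 1).add ((hpartial I).const_mul I)).const_mul (1 / 2 : ℂ)
  rw [lap, wd1, hsnd.fderiv, laplacian_eq_iteratedFDeriv_complexPlane]
  simp only [one_div, smul_add, add_apply, smul_apply, ContinuousLinearMap.comp_apply,
    ContinuousLinearMap.flip_apply, ofRealCLM_apply, smul_eq_mul, symm, iteratedFDeriv_two_apply,
    Matrix.cons_val_zero, Matrix.cons_val_one, ofReal_add]
  linear_combination (-(fderiv ℝ (fderiv ℝ u) z I I : ℂ)) * I_sq

section Directions

variable {E : Type*} [NormedAddCommGroup E] [NormedSpace ℂ E]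
  {F : Type*} [NormedAddCommGroup F] [NormedSpace ℝ F]

lemma laplacian_comp_smul_const {f : E → F} (hf : ContDiff ℝ 2 f) (v : E) (w : ℂ) :
    Δ (fun w : ℂ => f (w • v)) w =
      iteratedFDeriv ℝ 2 f (w • v) ![v, v] + iteratedFDeriv ℝ 2 f (w • v) ![I • v, I • v] := by
  let line : ℂ →L[ℝ] E := (ContinuousLinearMap.toSpanSingleton ℂ v).restrictScalars ℝ
  have hline : iteratedFDeriv ℝ 2 (fun w : ℂ => f (w • v)) w =
      (iteratedFDeriv ℝ 2 f (w • v)).compContinuousLinearMap fun _ => line :=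
    line.iteratedFDeriv_comp_right hf w le_rfl
  simp [laplacian_eq_iteratedFDeriv_complexPlane, hline, iteratedFDeriv_two_apply, line]

lemma continuous_laplacian_comp_smul_const {f : E → F} (hf : ContDiff ℝ 2 f) (w : ℂ) :
    Continuous fun v : E => Δ (fun w : ℂ => f (w • v)) w := by
  have hD : Continuous (fderiv ℝ (fderiv ℝ f)) :=
    (hf.fderiv_right (m := 1) le_rfl).continuous_fderiv one_ne_zero
  simp only [laplacian_comp_smul_const hf, iteratedFDeriv_two_apply]
  fun_prop

lemma isClosed_setOfPred_isHarmonic_comp_smul_const {P : E → ℝ} (hP : ContDiff ℝ 2 P) :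
    IsClosed {v : E | IsHarmonic fun w => P (w • v)} := by
  have hlap (v : E) (w : ℂ) :
      lap (fun w => P (w • v)) w = (Δ (fun w : ℂ => P (w • v)) w : ℝ) :=
    lap_eq_laplacian (by fun_prop) w
  simp only [IsHarmonic, hlap, ofReal_eq_zero, ofPred_forall]
  exact isClosed_iInter fun w =>
    isClosed_eq (continuous_laplacian_comp_smul_const hP w) continuous_const

theorem harmonic_directions_bounded_general {P : E → ℝ} (hP : ContDiff ℝ 2 P) {a : E}
    (ha : ¬ IsHarmonic fun w => P (w • a)) (b : E) :
    Bornology.IsBounded {ζ : ℂ | IsHarmonic fun w => P (w • (ζ • a + b))} := by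
  have hlim : Tendsto (fun ζ : ℂ => a + ζ⁻¹ • b) (Bornology.cobounded ℂ) (𝓝 a) := by
    simpa using ((tendsto_inv₀_cobounded (α := ℂ)).smul_const b).const_add a
  have hnear : ∀ᶠ ζ in Bornology.cobounded ℂ, ¬ IsHarmonic fun w => P (w • (a + ζ⁻¹ • b)) :=
    hlim.eventually ((isClosed_setOfPred_isHarmonic_comp_smul_const hP).isOpen_compl.mem_nhds ha)
  rw [Bornology.isBounded_def]
  filter_upwards [hnear, Bornology.eventually_ne_cobounded 0] with ζ hζ hζ0 hharm
  refine hζ ((isHarmonic_comp_const_mul_iff (fun w => P (w • (a + ζ⁻¹ • b))) hζ0).1 ?_)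
  have hdir : ζ • a + b = ζ • (a + ζ⁻¹ • b) := by rw [smul_add, smul_inv_smul₀ hζ0]
  simpa only [mem_ofPred_eq, hdir, smul_smul, mul_comm] using hharm

end Directions

/-- if `z ↦ P(z,0)` is subharmonic and non-harmonic, the set of
directions `ζ` along which the homogeneous plurisubharmonic polynomial `P` is
harmonic is bounded. -/
theorem harmonic_directions_bounded (k : ℕ) (hk : 1 ≤ k) (P : ℂ × ℂ → ℝ)
    (hpoly : IsRealPoly2 P) (hpsh : IsPsh P) (hhom : HomogeneousDeg P (2 * k))
    (hsub : Subharmonic fun z => P (z, 0)) (hnh : ¬ IsHarmonic fun z => P (z, 0)) :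
    Bornology.IsBounded {ζ : ℂ | IsHarmonic fun w => P (ζ * w, w)} := by
  simpa [mul_comm] using
    harmonic_directions_bounded_general hpoly.contDiff (a := (1, 0)) (by simpa using hnh) (0, 1)

end
end
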